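/- Inductive step for the least fixed point case of the main theorem: Let ⟨P, {→a}_{a∈L}⟩ be a PLTS, and let G₁ be a pLμ formula and X a variable such that μX.G₁ is in normal form. Assume the inductive hypothesis: for every interpretation ρ' : Var → (P → [0,1]) and every q ∈ P, ⟦G₁⟧ρ'(q) = Val↓(𝒢^{G₁}_{ρ'})(⟨q,G₁⟩) = Val↑(𝒢^{G₁}_{ρ'})(⟨q,G₁⟩). Then for every interpretation ρ and every p ∈ P, ⟦μX.G₁⟧ρ(p) = Val↓(𝒢^{μX.G₁}_ρ)(⟨p,μX.G₁⟩) = Val↑(𝒢^{μX.G₁}_ρ)(⟨p,μX.G₁⟩). -/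

import Mathlib

noncomputable section

open scoped unitInterval Classical

instance : Fact ((0:ℝ) ≤ 1) := ⟨zero_le_one⟩

/-- A discrete probability distribution on `X`: a `[0,1]`-valued (indeed nonnegative)
function summing to `1` (hence with countable support). -/
structure PDist (X : Type) where
  f : X → ℝ
  nonneg : ∀ x, 0 ≤ f x
  sum_one : HasSum f 1

/-- A probabilistic labeled transition system over labels `L` with states `P`:
for each label `a` and state `p`, the set of distributions `d` with `p →a d`. -/
structure PLTS (L P : Type) where
  trans : L → P → Set (PDist P)

/-- Formulas of the probabilistic modal μ-calculus, with variables drawn from `ℕ`. -/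
inductive pLmu (L : Type) : Type
  | var : ℕ → pLmu L
  | dia : L → pLmu L → pLmu L
  | box : L → pLmu L → pLmu L
  | or  : pLmu L → pLmu L → pLmu L
  | and : pLmu L → pLmu L → pLmu L
  | mu  : ℕ → pLmu L → pLmu L
  | nu  : ℕ → pLmu L → pLmu L

namespace pLmu

variable {L P : Type}

/-- free variables -/
def freeVars : pLmu L → Set ℕ
  | .var X => {X}
  | .dia _ G => freeVars G
  | .box _ G => freeVars G
  | .or G H => freeVars G ∪ freeVars H
  | .and G H => freeVars G ∪ freeVars H
  | .mu X G => freeVars G \ {X}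
  | .nu X G => freeVars G \ {X}

/-- the list of variables bound by the μ- and ν-binders occurring in a formula -/
def binders : pLmu L → List ℕ
  | .var _ => []
  | .dia _ G => binders G
  | .box _ G => binders G
  | .or G H => binders G ++ binders H
  | .and G H => binders G ++ binders H
  | .mu X G => X :: binders G
  | .nu X G => X :: binders G

/-- A formula is in normal form if every binder binds a distinct variable and no
variable occurs both free and bound. -/
def NormalForm (F : pLmu L) : Prop :=
  F.binders.Nodup ∧ ∀ X ∈ F.binders, X ∉ F.freeVars

/-- A formula is closed if it has no free variables. -/
def Closed (F : pLmu L) : Prop := F.freeVars = ∅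

/-- The expected value of `g : P → [0,1]` under a distribution `d` on `P`
(the real number `∑ q, d(q) · g(q)`, which lies in `[0,1]`, viewed in `[0,1]`). -/
def distExp (d : PDist P) (g : P → unitInterval) : unitInterval :=
  Set.projIcc 0 1 zero_le_one (∑' q, d.f q * (g q : ℝ))

/-- The denotational semantics `⟦F⟧ρ : P → [0,1]` of a pLμ formula, where least
(resp. greatest) fixed points are given, à la Knaster–Tarski, as the infimum of
prefixed points (resp. supremum of postfixed points) in the complete lattice `P → [0,1]`. -/
def sem (M : PLTS L P) : pLmu L → (ℕ → P → unitInterval) → P → unitInterval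
  | .var X, ρ, p => ρ X p
  | .dia a G, ρ, p => sSup ((fun d => distExp d (sem M G ρ)) '' M.trans a p)
  | .box a G, ρ, p => sInf ((fun d => distExp d (sem M G ρ)) '' M.trans a p)
  | .or G H, ρ, p => sem M G ρ p ⊔ sem M H ρ p
  | .and G H, ρ, p => sem M G ρ p ⊓ sem M H ρ p
  | .mu X G, ρ, p => sInf {g : P → unitInterval | sem M G (Function.update ρ X g) ≤ g} p
  | .nu X G, ρ, p => sSup {g : P → unitInterval | g ≤ sem M G (Function.update ρ X g)} p

end pLmu

noncomputable section

open scoped unitInterval Classical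

/-- The three agents of a 2½-player game. -/
inductive Player : Type
  | one : Player
  | two : Player
  | nature : Player
deriving DecidableEq

/-- A 2½-player arena: a directed graph `(S, E)`, an assignment of states to the
players (Player 1, Player 2, Nature), and probabilistic transition data at Nature
states. -/
structure Arena (S : Type) where
  E : S → Set S
  owner : S → Player
  prob : S → S → ℝ

namespace Arena

variable {S : Type}

/-- Well-formedness: at every Nature state `s`, `prob s` is a probability
distribution whose support is exactly the set `E s` of successors of `s`. -/
def Wellformed (A : Arena S) : Prop :=
  ∀ s, A.owner s = Player.nature →
    (∀ t, 0 ≤ A.prob s t) ∧ HasSum (A.prob s) 1 ∧ A.E s = Function.support (A.prob s)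

/-- `s` is a terminal state if it has no successors. -/
def Terminal (A : Arena S) (s : S) : Prop := A.E s = ∅

end Arena

/-- An (unbounded memory deterministic) strategy for player `pl` in arena `A`:
given the history `hist` and the current state `s` (a non-terminal state owned by
`pl`), it picks a successor of `s`. -/
structure Strategy {S : Type} (A : Arena S) (pl : Player) where
  next : List S → S → S
  valid : ∀ (hist : List S) (s : S), A.owner s = pl → A.E s ≠ ∅ → next hist s ∈ A.E s

variable {S : Type}

/-- The Markov chain determined by a strategy profile `(σ1, σ2)` and initial state
`s0`: the tree of finite paths from `s0` in which nodes ending in a Player 1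
(resp. Player 2) state are extended uniquely according to `σ1` (resp. `σ2`), nodes
ending in a Nature state branch fully over the successors, and (for the purpose of
encoding finite completed paths as infinite sequences) nodes ending in a terminal
state are extended by repeating the terminal state. -/
inductive MC (A : Arena S) (σ1 : Strategy A Player.one) (σ2 : Strategy A Player.two)
    (s0 : S) : List S → Prop
  | root : MC A σ1 σ2 s0 [s0]
  | one (l : List S) (s : S) : MC A σ1 σ2 s0 (l ++ [s]) → A.owner s = Player.one →
      A.E s ≠ ∅ → MC A σ1 σ2 s0 (l ++ [s, σ1.next l s])
  | two (l : List S) (s : S) : MC A σ1 σ2 s0 (l ++ [s]) → A.owner s = Player.two →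
      A.E s ≠ ∅ → MC A σ1 σ2 s0 (l ++ [s, σ2.next l s])
  | nature (l : List S) (s t : S) : MC A σ1 σ2 s0 (l ++ [s]) →
      A.owner s = Player.nature → t ∈ A.E s → MC A σ1 σ2 s0 (l ++ [s, t])
  | term (l : List S) (s : S) : MC A σ1 σ2 s0 (l ++ [s]) → A.E s = ∅ →
      MC A σ1 σ2 s0 (l ++ [s, s])

/-- The space of completed paths, encoded as infinite sequences of states
(a finite completed path, i.e. one ending in a terminal state, is encoded by
repeating its terminal state forever). -/
def PathSpace (S : Type) : Type := ℕ → S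

instance : MeasurableSpace (PathSpace S) :=
  @MeasurableSpace.pi ℕ (fun _ => S) (fun _ => ⊤)

/-- The basic cylinder set of completed paths extending a finite path. -/
def cyl (l : List S) : Set (PathSpace S) :=
  {u | ∀ i : Fin l.length, u i = l.get i}

/-- the probability of a single step -/
def stepProb (A : Arena S) (s t : S) : ℝ :=
  if A.owner s = Player.nature then A.prob s t else 1

/-- The product of the probabilities of the Nature steps along a finite path. -/
def pathProb (A : Arena S) : List S → ℝ
  | [] => 1
  | [_] => 1
  | s :: t :: l => stepProb A s t * pathProb A (t :: l)

/-- The weight assigned to a basic cylinder: the product of the probabilities of its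
Nature steps if the underlying finite path belongs to the Markov chain, `0` otherwise. -/
def cylWeight (A : Arena S) (σ1 : Strategy A Player.one) (σ2 : Strategy A Player.two)
    (s0 : S) (l : List S) : ℝ :=
  if MC A σ1 σ2 s0 l then pathProb A l else 0

/-- The Borel probability measure on completed paths induced by the Markov chain
`M^{s0}_{σ1,σ2}`: the unique probability measure assigning to every basic cylinder
its weight. -/
def pathMeasure (A : Arena S) (σ1 : Strategy A Player.one) (σ2 : Strategy A Player.two)
    (s0 : S) : MeasureTheory.Measure (PathSpace S) :=
  if h : ∃ μ : MeasureTheory.Measure (PathSpace S), MeasureTheory.IsProbabilityMeasure μ ∧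
      ∀ l : List S, l ≠ [] → μ (cyl l) = ENNReal.ofReal (cylWeight A σ1 σ2 s0 l)
  then h.choose else 0

/-- The payoff function induced by a parity structure `(pri, R)`: a completed path
reaching a terminal state gets the reward `R` of (the first occurrence of) that
terminal state; an infinite path gets `1` if the greatest priority occurring
infinitely often along it is even, and `0` otherwise. -/
def payoff (A : Arena S) (pri : S → ℕ) (R : S → ℝ) (u : PathSpace S) : ℝ :=
  if h : ∃ i, A.E (u i) = ∅ then R (u (Nat.find h))
  else if Even (sSup {n | {i | pri (u i) = n}.Infinite}) then 1 else 0

/-- The expected reward of Player 1 for the Markov chain `M^{s0}_{σ1,σ2}`: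
the integral of the payoff against the induced probability measure on paths. -/
def expReward (A : Arena S) (pri : S → ℕ) (R : S → ℝ) (σ1 : Strategy A Player.one)
    (σ2 : Strategy A Player.two) (s0 : S) : ℝ :=
  ∫ u, payoff A pri R u ∂(pathMeasure A σ1 σ2 s0)

/-- The lower value `Val↓` of the 2½-player parity game `⟨A, Φ_(pri,R)⟩`. -/
def lowerValue (A : Arena S) (pri : S → ℕ) (R : S → ℝ) (s : S) : ℝ :=
  ⨆ σ1 : Strategy A Player.one, ⨅ σ2 : Strategy A Player.two, expReward A pri R σ1 σ2 s

/-- The upper value `Val↑` of the 2½-player parity game `⟨A, Φ_(pri,R)⟩`. -/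
def upperValue (A : Arena S) (pri : S → ℕ) (R : S → ℝ) (s : S) : ℝ :=
  ⨅ σ2 : Strategy A Player.two, ⨆ σ1 : Strategy A Player.one, expReward A pri R σ1 σ2 s

/-- The Bellman functional `𝓕` on `S → ℝ` associated to the game `⟨A, Φ_(pri,R)⟩`. -/
def bellman (A : Arena S) (R : S → ℝ) (f : S → ℝ) : S → ℝ := fun s =>
  if A.E s = ∅ then R s
  else match A.owner s with
    | Player.one => sSup (f '' A.E s)
    | Player.two => sInf (f '' A.E s)
    | Player.nature => ∑' t : A.E s, A.prob s t * f t
namespace pLmu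

variable {L P : Type}

/-- the number of connectives of a formula -/
def size : pLmu L → ℕ
  | .var _ => 1
  | .dia _ G => size G + 1
  | .box _ G => size G + 1
  | .or G H => size G + size H + 1
  | .and G H => size G + size H + 1
  | .mu _ G => size G + 1
  | .nu _ G => size G + 1

/-- `varInfo F d X` looks up the (leftmost outermost) binder binding `X` in `F`,
returning `some (d', b)` where `d'` is the depth (starting from `d`) at which the
binder occurs and `b` is `true` for a μ-binder and `false` for a ν-binder, and
`none` if `X` is not bound in `F`. -/
def varInfo : pLmu L → ℕ → ℕ → Option (ℕ × Bool)
  | .var _, _, _ => none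
  | .dia _ G, d, X => varInfo G (d+1) X
  | .box _ G, d, X => varInfo G (d+1) X
  | .or G H, d, X => (varInfo G (d+1) X).orElse (fun _ => varInfo H (d+1) X)
  | .and G H, d, X => (varInfo G (d+1) X).orElse (fun _ => varInfo H (d+1) X)
  | .mu Y G, d, X => if Y = X then some (d, true) else varInfo G (d+1) X
  | .nu Y G, d, X => if Y = X then some (d, false) else varInfo G (d+1) X

/-- `bodyOf F X` is the body of the (leftmost outermost) binder binding `X` in `F`,
if any. -/
def bodyOf : pLmu L → ℕ → Option (pLmu L)
  | .var _, _ => none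
  | .dia _ G, X => bodyOf G X
  | .box _ G, X => bodyOf G X
  | .or G H, X => (bodyOf G X).orElse (fun _ => bodyOf H X)
  | .and G H, X => (bodyOf G X).orElse (fun _ => bodyOf H X)
  | .mu Y G, X => if Y = X then some G else bodyOf G X
  | .nu Y G, X => if Y = X then some G else bodyOf G X

end pLmu

/-- The states of the game `𝒢^F_ρ`: pairs of a process state or a distribution on
process states, and a (sub)formula. -/
abbrev GState (L P : Type) : Type := (P ⊕ PDist P) × pLmu L

/-- The arena of the 2½-player parity game `𝒢^F_ρ` associated to a PLTS `M`
and a formula `F`. -/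
def gameArena (M : PLTS L P) (F : pLmu L) : Arena (GState L P) where
  E := fun s =>
    match s with
    | (Sum.inl p, .var X) =>
        match pLmu.bodyOf F X with
        | some H => {((Sum.inl p : P ⊕ PDist P), H)}
        | none => ∅
    | (Sum.inl p, .dia a G) => (fun d => ((Sum.inr d : P ⊕ PDist P), G)) '' M.trans a p
    | (Sum.inl p, .box a G) => (fun d => ((Sum.inr d : P ⊕ PDist P), G)) '' M.trans a p
    | (Sum.inl p, .or G H) => {((Sum.inl p : P ⊕ PDist P), G), ((Sum.inl p : P ⊕ PDist P), H)}
    | (Sum.inl p, .and G H) => {((Sum.inl p : P ⊕ PDist P), G), ((Sum.inl p : P ⊕ PDist P), H)}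
    | (Sum.inl p, .mu _ G) => {((Sum.inl p : P ⊕ PDist P), G)}
    | (Sum.inl p, .nu _ G) => {((Sum.inl p : P ⊕ PDist P), G)}
    | (Sum.inr d, G) => (fun q => ((Sum.inl q : P ⊕ PDist P), G)) '' Function.support d.f
  owner := fun s =>
    match s with
    | (Sum.inl _, .var X) =>
        match pLmu.varInfo F 0 X with
        | some (_, true) => Player.one
        | some (_, false) => Player.two
        | none => Player.one
    | (Sum.inl _, .dia _ _) => Player.one
    | (Sum.inl _, .box _ _) => Player.two
    | (Sum.inl _, .or _ _) => Player.one
    | (Sum.inl _, .and _ _) => Player.two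
    | (Sum.inl _, .mu _ _) => Player.one
    | (Sum.inl _, .nu _ _) => Player.two
    | (Sum.inr _, _) => Player.nature
  prob := fun s t =>
    match s, t with
    | (Sum.inr d, G), (Sum.inl q, G') => if G' = G then d.f q else 0
    | _, _ => 0

/-- The priority assignment of the game `𝒢^F_ρ`: a state `⟨p, X⟩` with `X` bound
in `F` at binder depth `d` gets the positive priority `2(|F| - d) + 1` if `X` is a
μ-variable and `2(|F| - d)` if `X` is a ν-variable (so that μ-variables get odd and
ν-variables get even priorities, and variables subsuming others get greater
priorities); all other states get priority `0`. -/
def gamePri (F : pLmu L) : GState L P → ℕ := fun s =>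
  match s with
  | (Sum.inl _, .var X) =>
      match pLmu.varInfo F 0 X with
      | some (d, true) => 2 * (F.size - d) + 1
      | some (d, false) => 2 * (F.size - d)
      | none => 0
  | _ => 0

/-- The terminal reward assignment of the game `𝒢^F_ρ`: a terminal state `⟨p, X⟩`
(with `X` free in `F`) gets reward `ρ(X)(p)`; a terminal state `⟨p, ⟨a⟩G⟩` gets
reward `0` and a terminal state `⟨p, [a]G⟩` gets reward `1`. -/
def gameR (F : pLmu L) (ρ : ℕ → P → unitInterval) : GState L P → ℝ := fun s =>
  match s with
  | (Sum.inl p, .var X) => (ρ X p : ℝ)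
  | (Sum.inl _, .dia _ _) => 0
  | (Sum.inl _, .box _ _) => 1
  | _ => 0

/-!
The game of `μX.G` is the game of `G` under `ρ[v/X]`, except that the states `⟨q, X⟩`, which are
terminal there with reward `v q`, lead back to `⟨q, G⟩` and carry the greatest priority, an odd one.

*Lower value.* Let `v` be the lower value of the game of `μX.G` at the states `⟨q, G⟩`. If Player 1
switches, at the first visit to some `⟨q, X⟩`, from any strategy in the game of `G` to a nearly
optimal one in the game of `μX.G`, nothing but an arbitrarily small amount is lost. So `v` is a
prefixed point of `f ↦ ⟦G⟧ρ[f/X]` and dominates the least one.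

*Upper value.* Let `v` be any prefixed point. In the game of `μX.G`, Player 2 plays between the
`k`-th and the next visit to a state `⟨q, X⟩` a strategy that is `εₖ`-optimal in the game of `G`
under `ρ[v/X]`. If plays visiting these states more than `n` times are counted as lost for Player 1,
induction on `n` bounds the expected reward by `v q + ∑ εₖ`. Since plays visiting them infinitely
often are lost anyway, monotone convergence gives the same bound for the full game.

The measure on plays comes from the Ionescu-Tulcea theorem. As the next move depends on the whole
history, the theorem is applied to the Markov chain of records, which carry the history along.
-/

open MeasureTheory ProbabilityTheory

/-! ### Random paths with history-dependent steps -/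

namespace PathSpace

lemma measurable_eval (i : ℕ) : @Measurable (PathSpace S) S _ ⊤ fun u => u i :=
  @measurable_pi_apply ℕ (fun _ => S) (fun _ => ⊤) i

lemma measurable_mem (i : ℕ) (A : Set S) : Measurable fun u : PathSpace S => u i ∈ A :=
  measurableSet_setOfPred.1 (measurable_eval i (t := A) trivial)

lemma measurable_of_eval {Ω : Type*} [MeasurableSpace Ω] {f : Ω → PathSpace S}
    (h : ∀ i, @Measurable Ω S _ ⊤ fun ω => f ω i) : Measurable f :=
  (@measurable_pi_iff Ω ℕ (fun _ => S) _ (fun _ => ⊤) f).2 h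

/-- The path that starts at `s` and continues along `u`. -/
def cons (s : S) (u : PathSpace S) : PathSpace S
  | 0 => s
  | n + 1 => u n

/-- The path that stays at `s`. -/
def const (s : S) : PathSpace S := fun _ => s

lemma cons_const (s : S) : cons s (const s) = const s := by
  funext n
  cases n <;> rfl

lemma measurable_cons (s : S) : Measurable (cons s) :=
  measurable_of_eval fun
    | 0 => @measurable_const S (PathSpace S) ⊤ _ s
    | n + 1 => measurable_eval n

lemma cons_mem_cyl_cons {s t : S} {u : PathSpace S} {l : List S} :
    cons s u ∈ cyl (t :: l) ↔ s = t ∧ u ∈ cyl l :=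
  ⟨fun h => ⟨h ⟨0, by simp⟩, fun i => h i.succ⟩, fun h i => Fin.cases h.1 h.2 i⟩

lemma mem_cyl_nil (u : PathSpace S) : u ∈ cyl ([] : List S) := fun i => i.elim0

lemma mem_cyl_ofFn {n : ℕ} {u : PathSpace S} {v : Fin n → S} :
    u ∈ cyl (List.ofFn v) ↔ (fun i : Fin n => u i) = v := by
  simp only [cyl, Set.mem_ofPred_eq, Fin.forall_iff, List.length_ofFn, List.get_eq_getElem,
    List.getElem_ofFn, funext_iff]

lemma measurableSet_cyl (l : List S) : MeasurableSet (cyl l) := by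
  simp only [cyl, Set.ofPred_forall]
  exact .iInter fun i => measurable_eval i (t := {l.get i}) trivial

end PathSpace

/-- A history-dependent random step: `K l s` is the law of the state that follows `s`, given
that the states visited before `s` are those of `l`, in chronological order. -/
abbrev StepLaw (S : Type) : Type := List S → S → PMF S

namespace StepLaw

variable (K : StepLaw S)

/-- The step law that remains once the states of `l₀` have been visited. -/
def after (l₀ : List S) : StepLaw S := fun l => K (l₀ ++ l)

/-- The probability that the states visited after a first state are those of a given list. -/
def weight : StepLaw S → S → List S → ENNReal
  | _, _, [] => 1
  | K, s, x :: l => K [] s x * weight (K.after [s]) x l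

lemma weight_append_singleton {K : StepLaw S} {s t x : S} {l m : List S}
    (h : s :: l = m ++ [t]) : K.weight s (l ++ [x]) = K.weight s l * K m t x := by
  induction l generalizing K s m with
  | nil =>
    obtain ⟨rfl, rfl⟩ : m = [] ∧ t = s := by
      simpa [List.append_eq_singleton_iff] using h.symm
    simp [weight]
  | cons y l ih =>
    obtain ⟨m, rfl, hm⟩ : ∃ m', m = s :: m' ∧ y :: l = m' ++ [t] := by
      simpa [List.cons_eq_append_iff] using h
    rw [List.cons_append, weight, weight, ih hm, mul_assoc]
    rfl

lemma tsum_weight_ofFn (s : S) (n : ℕ) : ∑' v : Fin n → S, K.weight s (List.ofFn v) = 1 := by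
  induction n generalizing K s with
  | zero => simp [weight, tsum_fintype]
  | succ n ih =>
    rw [← (Fin.consEquiv fun _ : Fin (n + 1) => S).tsum_eq, ENNReal.tsum_prod']
    simp only [Fin.consEquiv, Equiv.coe_fn_mk, List.ofFn_cons, weight, ENNReal.tsum_mul_left, ih,
      mul_one, PMF.tsum_coe]

end StepLaw

lemma eq_sum_smul_dirac {ι α : Type*} [MeasurableSpace α] [MeasurableSingletonClass α]
    {w : ι → ENNReal} (hw : ∑' i, w i = 1) {f : ι → α} (hf : Function.Injective f)
    {μ : Measure α} [IsProbabilityMeasure μ] (h : ∀ i, w i ≤ μ {f i}) :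
    μ = Measure.sum fun i => w i • Measure.dirac (f i) := by
  have : IsProbabilityMeasure (Measure.sum fun i => w i • Measure.dirac (f i)) :=
    ⟨by simpa using hw⟩
  refine (Measure.eq_of_le_of_isProbabilityMeasure (Measure.le_intro fun A hA _ => ?_)).symm
  have hfA (i : ι) : w i * Measure.dirac (f i) A ≤ μ ({f i} ∩ A) := by
    by_cases hi : f i ∈ A
    · simpa [hi, Set.inter_eq_left.2 (Set.singleton_subset_iff.2 hi)] using h i
    · simp [hi, Measure.dirac_apply' _ hA]
  calc _ = ∑' i, w i * Measure.dirac (f i) A := by simp [Measure.sum_apply _ hA]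
    _ ≤ ∑' i, μ ({f i} ∩ A) := ENNReal.tsum_le_tsum hfA
    _ ≤ μ (⋃ i, {f i} ∩ A) := tsum_meas_le_meas_iUnion_of_disjoint _
        (fun i => (measurableSet_singleton _).inter hA) fun i j hij =>
          (Set.disjoint_singleton.2 (hf.ne hij)).mono Set.inter_subset_left Set.inter_subset_left
    _ ≤ μ A := measure_mono (Set.iUnion_subset fun i => Set.inter_subset_right)

namespace StepLaw

lemma eq_of_weight_le {K : StepLaw S} {s : S} {μ ν : Measure (PathSpace S)}
    [IsProbabilityMeasure μ] [IsProbabilityMeasure ν] (hμ : ∀ l, K.weight s l ≤ μ (cyl (s :: l)))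
    (hν : ∀ l, K.weight s l ≤ ν (cyl (s :: l))) : μ = ν := by
  let : MeasurableSpace S := ⊤
  let pre (n : ℕ) (u : PathSpace S) (i : Fin (n + 1)) : S := u i
  have hpre (n : ℕ) : Measurable (pre n) :=
    measurable_pi_lambda _ fun i => PathSpace.measurable_eval i
  have map_pre (n : ℕ) (ξ : Measure (PathSpace S)) [IsProbabilityMeasure ξ]
      (hξ : ∀ l, K.weight s l ≤ ξ (cyl (s :: l))) :
      ξ.map (pre n) = Measure.sum fun v : Fin n → S =>
        K.weight s (List.ofFn v) • Measure.dirac (Fin.cons s v) := by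
    have := Measure.isProbabilityMeasure_map (μ := ξ) (hpre n).aemeasurable
    refine eq_sum_smul_dirac (K.tsum_weight_ofFn s n)
      (Fin.cons_right_injective (α := fun _ => S) s) fun v => ?_
    rw [Measure.map_apply (hpre n) (measurableSet_singleton _)]
    refine (hξ _).trans_eq (congrArg ξ (Set.ext fun u => ?_))
    rw [← List.ofFn_cons, PathSpace.mem_cyl_ofFn]
    rfl
  refine IsProjectiveLimit.unique (α := fun _ : ℕ => S) (P := fun J => ν.map J.restrict)
    (fun J => ?_) fun _ => rfl
  let res (v : Fin (J.sup id + 1) → S) (j : J) : S :=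
    v ⟨j, Nat.lt_succ_of_le (Finset.le_sup (f := id) j.2)⟩
  have hres : Measurable res := measurable_pi_lambda _ fun j => measurable_pi_apply _
  calc μ.map J.restrict = (μ.map (pre _)).map res := (Measure.map_map hres (hpre _)).symm
    _ = (ν.map (pre _)).map res := by rw [map_pre _ μ hμ, map_pre _ ν hν]
    _ = ν.map J.restrict := Measure.map_map hres (hpre _)

end StepLaw

lemma preimage_frestrictLe_singleton {X : ℕ → Type*} (z : Π n, X n) (n : ℕ) :
    Preorder.frestrictLe n ⁻¹' {Preorder.frestrictLe n z} =
      {x : Π n, X n | ∀ i ≤ n, x i = z i} := by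
  ext x
  simp [funext_iff]

section Traj

variable {X : ℕ → Type*} [∀ n, MeasurableSpace (X n)] [∀ n, MeasurableSingletonClass (X n)]
  (κ : (n : ℕ) → Kernel (Π i : Finset.Iic n, X i) (X (n + 1))) [∀ n, IsMarkovKernel (κ n)]

lemma traj_agree_zero (z : Π n, X n) :
    Kernel.traj κ 0 (Preorder.frestrictLe 0 z) {x | ∀ i ≤ 0, x i = z i} = 1 := by
  rw [← preimage_frestrictLe_singleton,
    ← Measure.map_apply (by fun_prop) (measurableSet_singleton _),
    Kernel.traj_map_frestrictLe_apply, Kernel.partialTraj_self, Kernel.id_apply,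
    Measure.dirac_apply_of_mem (Set.mem_singleton _)]

lemma traj_agree_succ (x₀ : Π i : Finset.Iic 0, X i) (z : Π n, X n) (n : ℕ) :
    Kernel.traj κ 0 x₀ {x | ∀ i ≤ n + 1, x i = z i} =
      Kernel.traj κ 0 x₀ {x | ∀ i ≤ n, x i = z i} *
        κ n (Preorder.frestrictLe n z) {z (n + 1)} := by
  have key := congrArg (· ({Preorder.frestrictLe n z} ×ˢ {z (n + 1)}))
    (Kernel.partialTraj_compProd_eq_map_traj (κ := κ) (x₀ := x₀) (Nat.zero_le n))
  rw [Measure.compProd_apply_prod (measurableSet_singleton _) (measurableSet_singleton _),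
    lintegral_singleton, ← Kernel.traj_map_frestrictLe_apply, mul_comm,
    Measure.map_apply (by fun_prop) (measurableSet_singleton _), preimage_frestrictLe_singleton,
    Measure.map_apply (by fun_prop)
      ((measurableSet_singleton _).prod (measurableSet_singleton _))] at key
  simpa [Set.preimage, funext_iff, Nat.le_succ_iff, or_imp, forall_and] using key.symm

end Traj

namespace StepLaw

/-- The state of the Markov chain that generates the paths of a step law: the states visited so
far, in chronological order, and the current one. Recording the past makes the chain homogeneous
on a discrete space, so that no measurability is asked of the step law. -/
structure Record (S : Type) where
  past : List S
  current : S

instance : MeasurableSpace (Record S) := ⊤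

instance : MeasurableSingletonClass (Record S) := ⟨fun _ => trivial⟩

namespace Record

/-- The sequence of current states of a sequence of records. -/
def path (r : ℕ → Record S) : PathSpace S := fun n => (r n).current

lemma measurable_path : Measurable (path (S := S)) :=
  PathSpace.measurable_of_eval fun i A _ =>
    (measurable_pi_apply i : Measurable fun r : ℕ → Record S => r i) (t := current ⁻¹' A) trivial

end Record

variable (K : StepLaw S)

/-- The law of the record that follows `r`. -/
def recordStep (r : Record S) : PMF (Record S) :=
  (K r.past r.current).map fun x => ⟨r.past ++ [r.current], x⟩

lemma recordStep_apply (r : Record S) (x : S) :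
    K.recordStep r ⟨r.past ++ [r.current], x⟩ = K r.past r.current x := by
  rw [recordStep, PMF.map_apply, tsum_eq_single x fun y hy => if_neg (by simpa using hy.symm)]
  simp

/-- The transition kernel of the Markov chain of records, which only looks at the last record. -/
def recordKernel (n : ℕ) : Kernel (Π _ : Finset.Iic n, Record S) (Record S) :=
  .comap ⟨fun r => (K.recordStep r).toMeasure, measurable_from_top⟩ (fun r => r ⟨n, by simp⟩)
    (measurable_pi_apply _)

instance (n : ℕ) : IsMarkovKernel (K.recordKernel n) :=
  ⟨fun _ => PMF.toMeasure.isProbabilityMeasure _⟩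

/-- The law of the Markov chain of records started at `s` with an empty past. -/
def recordLaw (s : S) : Measure (ℕ → Record S) :=
  Kernel.traj (X := fun _ => Record S) K.recordKernel 0 fun _ => ⟨[], s⟩

instance (s : S) : IsProbabilityMeasure (K.recordLaw s) := by
  unfold recordLaw; infer_instance

/-- The law of the path generated by the step law `K` from the initial state `s`. -/
def pathLaw (s : S) : Measure (PathSpace S) :=
  (K.recordLaw s).map Record.path

instance (s : S) : IsProbabilityMeasure (K.pathLaw s) :=
  Measure.isProbabilityMeasure_map Record.measurable_path.aemeasurable

lemma recordLaw_agree (u : ℕ → S) (n : ℕ) :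
    K.recordLaw (u 0) {r | ∀ i ≤ n, r i = ⟨(List.range i).map u, u i⟩} =
      K.weight (u 0) ((List.range n).map fun i => u (i + 1)) := by
  induction n with
  | zero =>
    have h₀ : (fun _ => ⟨[], u 0⟩) = Preorder.frestrictLe (π := fun _ => Record S) 0
        fun i => ⟨(List.range i).map u, u i⟩ := by
      funext ⟨i, hi⟩
      obtain rfl : i = 0 := by simpa using hi
      rfl
    rw [recordLaw, h₀, traj_agree_zero]
    rfl
  | succ n ih =>
    have hu : u 0 :: (List.range n).map (fun i => u (i + 1)) = (List.range n).map u ++ [u n] := by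
      rw [← List.map_singleton, ← List.map_append, ← List.range_succ, List.range_succ_eq_map]
      simp
    rw [recordLaw, traj_agree_succ, ← recordLaw, ih]
    simp only [List.range_succ, List.map_append, List.map_singleton, weight_append_singleton hu]
    congr 1
    exact (PMF.toMeasure_apply_singleton _ _ (measurableSet_singleton _)).trans
      (K.recordStep_apply ⟨(List.range n).map u, u n⟩ (u (n + 1)))

lemma weight_le_pathLaw_cyl (s : S) (l : List S) : K.weight s l ≤ K.pathLaw s (cyl (s :: l)) := by
  have hl : (List.range l.length).map (fun i => (s :: l).getD (i + 1) s) = l :=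
    List.ext_getElem (by simp) (by simp +contextual)
  have key := K.recordLaw_agree (fun i => (s :: l).getD i s) l.length
  rw [hl, List.getD_cons_zero] at key
  rw [pathLaw, Measure.map_apply Record.measurable_path (PathSpace.measurableSet_cyl _), ← key]
  refine measure_mono fun r hr i => ?_
  simp [Record.path, hr i (Nat.le_of_lt_succ i.2), List.getElem?_eq_getElem i.2]

variable {K}

lemma pathLaw_unique {s : S} {μ : Measure (PathSpace S)} [IsProbabilityMeasure μ]
    (h : ∀ l, K.weight s l ≤ μ (cyl (s :: l))) : μ = K.pathLaw s :=
  eq_of_weight_le h (K.weight_le_pathLaw_cyl s)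

variable (K)

lemma pathLaw_eq_sum (s : S) :
    K.pathLaw s =
      Measure.sum fun x => K [] s x • ((K.after [s]).pathLaw x).map (PathSpace.cons s) := by
  have (x : S) : IsProbabilityMeasure (((K.after [s]).pathLaw x).map (PathSpace.cons s)) :=
    Measure.isProbabilityMeasure_map (PathSpace.measurable_cons s).aemeasurable
  have : IsProbabilityMeasure
      (Measure.sum fun x => K [] s x • ((K.after [s]).pathLaw x).map (PathSpace.cons s)) :=
    ⟨by simp [PMF.tsum_coe]⟩
  refine (pathLaw_unique fun l => ?_).symm
  cases l with
  | nil =>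
    simp [weight, Measure.sum_apply, Measure.map_apply, PathSpace.measurable_cons,
      PathSpace.measurableSet_cyl, Set.preimage, PathSpace.cons_mem_cyl_cons,
      PathSpace.mem_cyl_nil, PMF.tsum_coe]
  | cons x l =>
    rw [Measure.sum_apply _ (PathSpace.measurableSet_cyl _)]
    refine le_trans ?_ (ENNReal.le_tsum x)
    rw [Measure.smul_apply,
      Measure.map_apply (PathSpace.measurable_cons s) (PathSpace.measurableSet_cyl _)]
    have hcyl : PathSpace.cons s ⁻¹' cyl (s :: x :: l) = cyl (x :: l) := by
      simp [Set.preimage, PathSpace.cons_mem_cyl_cons]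
    rw [hcyl, smul_eq_mul, weight]
    gcongr
    exact (K.after [s]).weight_le_pathLaw_cyl x l

lemma lintegral_pathLaw (s : S) {f : PathSpace S → ENNReal} (hf : Measurable f) :
    ∫⁻ u, f u ∂K.pathLaw s = ∑' x, K [] s x * ∫⁻ u, f (.cons s u) ∂(K.after [s]).pathLaw x := by
  rw [pathLaw_eq_sum, lintegral_sum_measure]
  simp only [lintegral_smul_measure, lintegral_map hf (PathSpace.measurable_cons s), smul_eq_mul]

lemma pathLaw_apply (s : S) {A : Set (PathSpace S)} (hA : MeasurableSet A) :
    K.pathLaw s A = ∑' x, K [] s x * (K.after [s]).pathLaw x (.cons s ⁻¹' A) := by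
  rw [pathLaw_eq_sum, Measure.sum_apply _ hA]
  simp only [Measure.smul_apply, Measure.map_apply (PathSpace.measurable_cons s) hA, smul_eq_mul]

lemma pathLaw_cyl_cons (s t : S) (l : List S) :
    K.pathLaw s (cyl (t :: l)) = if s = t then K.weight s l else 0 := by
  induction l generalizing K s t with
  | nil =>
    rw [pathLaw_apply _ _ (PathSpace.measurableSet_cyl _)]
    simp only [Set.preimage, PathSpace.cons_mem_cyl_cons, PathSpace.mem_cyl_nil]
    by_cases h : s = t <;> simp [h, weight, PMF.tsum_coe]
  | cons x l ih =>
    rw [pathLaw_apply _ _ (PathSpace.measurableSet_cyl _)]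
    simp only [Set.preimage, PathSpace.cons_mem_cyl_cons]
    by_cases h : s = t
    · simp [h, weight, ih]
    · simp [h]

lemma setLIntegral_pathLaw (s : S) {A : Set (PathSpace S)} (hA : MeasurableSet A)
    {f : PathSpace S → ENNReal} (hf : Measurable f) :
    ∫⁻ u in A, f u ∂K.pathLaw s =
      ∑' x, K [] s x * ∫⁻ u in .cons s ⁻¹' A, f (.cons s u) ∂(K.after [s]).pathLaw x := by
  simp only [← lintegral_indicator hA, K.lintegral_pathLaw s (hf.indicator hA),
    ← lintegral_indicator (PathSpace.measurable_cons s hA)]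
  rfl

variable {K}

lemma lintegral_pathLaw_of_eq_pure {s t : S} (h : K [] s = PMF.pure t) {f : PathSpace S → ENNReal}
    (hf : Measurable f) :
    ∫⁻ u, f u ∂K.pathLaw s = ∫⁻ u, f (.cons s u) ∂(K.after [s]).pathLaw t := by
  rw [lintegral_pathLaw _ _ hf, h, tsum_eq_single t (by simp +contextual)]
  simp

lemma ae_eval_zero (K : StepLaw S) (s : S) : ∀ᵐ u ∂K.pathLaw s, u 0 = s := by
  have h := K.pathLaw_cyl_cons s s []
  rw [if_pos rfl, weight, ← mem_ae_iff_prob_eq_one (PathSpace.measurableSet_cyl _)] at h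
  filter_upwards [h] with u hu using hu ⟨0, by simp⟩

lemma pathLaw_of_absorbing {s : S} (h : ∀ l, K l s = PMF.pure s) :
    K.pathLaw s = Measure.dirac (PathSpace.const s) := by
  refine (pathLaw_unique fun l => ?_).symm
  induction l generalizing K with
  | nil => exact (Measure.dirac_apply_of_mem fun i => by simp [PathSpace.const]).ge
  | cons x l ih =>
    by_cases hx : x = s
    · subst hx
      have hcyl : PathSpace.const x ∈ cyl (x :: x :: l) ↔ PathSpace.const x ∈ cyl (x :: l) := by
        rw [← PathSpace.cons_const, PathSpace.cons_mem_cyl_cons, PathSpace.cons_const]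
        exact and_iff_right rfl
      simpa [weight, h, Measure.dirac_apply' _ (PathSpace.measurableSet_cyl _), Set.indicator, hcyl]
        using ih (K := K.after [x]) fun l => h _
    · simp [weight, h, hx]

end StepLaw

namespace PathSpace

/-- The path `u` frozen from its first visit to `T` on. -/
def halt (T : Set S) (u : PathSpace S) : PathSpace S
  | 0 => u 0
  | n + 1 => if halt T u n ∈ T then halt T u n else u (n + 1)

variable {T : Set S} {s : S} {u : PathSpace S}

lemma measurable_halt (T : Set S) : Measurable (halt T) := by
  refine measurable_of_eval fun i => ?_
  let : MeasurableSpace S := ⊤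
  induction i with
  | zero => exact measurable_eval 0
  | succ n ih => exact .ite (ih (t := T) trivial) ih (measurable_eval (n + 1))

lemma halt_of_mem (h : u 0 ∈ T) : halt T u = const (u 0) := by
  funext n
  induction n with
  | zero => rfl
  | succ n ih => rw [halt, ih, const, if_pos h]; rfl

lemma halt_cons_of_notMem (h : s ∉ T) : halt T (cons s u) = cons s (halt T u) := by
  have hsucc (n : ℕ) : halt T (cons s u) (n + 1) = halt T u n := by
    induction n with
    | zero => exact if_neg h
    | succ n ih => rw [halt, ih]; rfl
  funext n
  cases n with
  | zero => rfl
  | succ n => exact hsucc n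

lemma halt_apply_of_forall_notMem {n : ℕ} (h : ∀ i < n, u i ∉ T) : halt T u n = u n := by
  induction n with
  | zero => rfl
  | succ n ih =>
    rw [halt, ih fun i hi => h i (hi.trans n.lt_succ_self), if_neg (h n n.lt_succ_self)]

end PathSpace

namespace StepLaw

/-- The step law that follows `K` outside `T` and never leaves a state of `T`. -/
def halt (K : StepLaw S) (T : Set S) : StepLaw S := fun l s =>
  if s ∈ T then PMF.pure s else K l s

variable {T : Set S} {K K' : StepLaw S}

lemma map_halt_pathLaw_of_mem (K : StepLaw S) {s : S} (hs : s ∈ T) :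
    (K.pathLaw s).map (PathSpace.halt T) = Measure.dirac (PathSpace.const s) := by
  have h : PathSpace.halt T =ᵐ[K.pathLaw s] fun _ => PathSpace.const s := by
    filter_upwards [K.ae_eval_zero s] with u hu
    rw [PathSpace.halt_of_mem (hu.symm ▸ hs), hu]
  rw [Measure.map_congr h, Measure.map_const, measure_univ, one_smul]

lemma map_halt_pathLaw (h : ∀ l s, (∀ x ∈ l, x ∉ T) → s ∉ T → K l s = K' l s) (s : S) :
    (K.pathLaw s).map (PathSpace.halt T) = (K'.halt T).pathLaw s := by
  have : IsProbabilityMeasure ((K.pathLaw s).map (PathSpace.halt T)) :=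
    Measure.isProbabilityMeasure_map (PathSpace.measurable_halt T).aemeasurable
  refine pathLaw_unique fun l => ?_
  induction l generalizing K K' s with
  | nil =>
    have hpre : PathSpace.halt T ⁻¹' cyl [s] = cyl [s] := by
      ext u; simp [cyl, PathSpace.halt]
    rw [Measure.map_apply (PathSpace.measurable_halt T) (PathSpace.measurableSet_cyl _), hpre,
      pathLaw_cyl_cons, if_pos rfl]
    rfl
  | cons x l ih =>
    by_cases hs : s ∈ T
    · rw [K.map_halt_pathLaw_of_mem hs, ← pathLaw_of_absorbing (K := K'.halt T) fun l => if_pos hs]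
      exact weight_le_pathLaw_cyl _ _ _
    have hpre : PathSpace.cons s ⁻¹' (PathSpace.halt T ⁻¹' cyl (s :: x :: l)) =
        PathSpace.halt T ⁻¹' cyl (x :: l) := by
      ext u
      simp [PathSpace.halt_cons_of_notMem hs, PathSpace.cons_mem_cyl_cons]
    have hstep : K'.halt T [] s = K [] s := (if_neg hs).trans (h [] s (by simp) hs).symm
    have hafter := ih (K := K.after [s]) (K' := K'.after [s])
      (fun l t hl => h _ t (by simpa [hs] using hl)) x
      (Measure.isProbabilityMeasure_map (PathSpace.measurable_halt T).aemeasurable)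
    rw [Measure.map_apply (PathSpace.measurable_halt T) (PathSpace.measurableSet_cyl _)] at hafter ⊢
    rw [pathLaw_apply _ _ (PathSpace.measurable_halt T (PathSpace.measurableSet_cyl _)), hpre,
      weight, hstep]
    exact (mul_le_mul_right hafter _).trans (ENNReal.le_tsum x)

lemma lintegral_pathLaw_congr (h : ∀ l s, (∀ x ∈ l, x ∉ T) → s ∉ T → K l s = K' l s)
    {f : PathSpace S → ENNReal} (hf : Measurable f) (hfT : ∀ u, f (u.halt T) = f u) (s : S) :
    ∫⁻ u, f u ∂K.pathLaw s = ∫⁻ u, f u ∂K'.pathLaw s := by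
  have key (K : StepLaw S) :
      ∫⁻ u, f u ∂K.pathLaw s = ∫⁻ u, f u ∂(K.pathLaw s).map (PathSpace.halt T) := by
    simp only [lintegral_map hf (PathSpace.measurable_halt T), hfT]
  rw [key K, key K', map_halt_pathLaw h, map_halt_pathLaw fun _ _ _ _ => rfl]

end StepLaw

namespace PathSpace

/-- The paths that visit `T` within the first `n` steps. -/
def hitBy (T : Set S) (n : ℕ) : Set (PathSpace S) := {u | ∃ i ≤ n, u i ∈ T}

variable {T : Set S}

lemma measurableSet_hitBy (T : Set S) (n : ℕ) : MeasurableSet (hitBy T n) := by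
  simp only [hitBy, Set.ofPred_exists, Set.ofPred_and]
  exact .iUnion fun i => (MeasurableSet.const _).inter (measurable_mem i T).setOf

lemma monotone_hitBy (T : Set S) : Monotone (hitBy T) :=
  fun _ _ h _ ⟨i, hi, hu⟩ => ⟨i, hi.trans h, hu⟩

lemma notMem_iUnion_hitBy {u : PathSpace S} : u ∉ ⋃ n, hitBy T n ↔ ∀ i, u i ∉ T := by
  simp only [hitBy, Set.mem_iUnion, Set.mem_ofPred_eq, not_exists, not_and]
  exact ⟨fun h i => h i i le_rfl, fun h _ i _ => h i⟩

lemma preimage_cons_hitBy_succ {s : S} (hs : s ∉ T) (n : ℕ) :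
    cons s ⁻¹' hitBy T (n + 1) = hitBy T n := by
  ext u
  constructor
  · rintro ⟨_ | i, hi, hu⟩
    · exact absurd hu hs
    · exact ⟨i, Nat.succ_le_succ_iff.1 hi, hu⟩
  · rintro ⟨i, hi, hu⟩
    exact ⟨i + 1, Nat.succ_le_succ hi, hu⟩

end PathSpace

namespace StepLaw

variable {T : Set S} {φ ψ : PathSpace S → ENNReal}

lemma setLIntegral_hitBy_of_mem (K : StepLaw S) {s : S} (hs : s ∈ T) (n : ℕ) :
    ∫⁻ u in PathSpace.hitBy T n, φ u ∂K.pathLaw s = ∫⁻ u, φ u ∂K.pathLaw s := by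
  rw [Measure.restrict_eq_self_of_ae_mem]
  filter_upwards [K.ae_eval_zero s] with u hu using ⟨0, n.zero_le, hu.symm ▸ hs⟩

lemma pathLaw_hitBy_zero (K : StepLaw S) {s : S} (hs : s ∉ T) :
    K.pathLaw s (PathSpace.hitBy T 0) = 0 := by
  refine measure_eq_zero_iff_ae_notMem.2 ?_
  filter_upwards [K.ae_eval_zero s] with u hu
  rintro ⟨i, hi, hui⟩
  exact hs (hu ▸ Nat.le_zero.1 hi ▸ hui)

lemma setLIntegral_hitBy_le (hφ : Measurable φ) (hψ : Measurable ψ)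
    (hφ_cons : ∀ s, s ∉ T → ∀ u, φ (.cons s u) ≤ φ u)
    (hψ_cons : ∀ s, s ∉ T → ∀ u, ψ u ≤ ψ (.cons s u)) (n : ℕ) (K : StepLaw S) (s : S)
    (hit : ∀ l, (∀ x ∈ l, x ∉ T) → ∀ t ∈ T,
      ∫⁻ u, φ u ∂(K.after l).pathLaw t ≤ ∫⁻ u, ψ u ∂(K.after l).pathLaw t) :
    ∫⁻ u in PathSpace.hitBy T n, φ u ∂K.pathLaw s ≤
      ∫⁻ u in PathSpace.hitBy T n, ψ u ∂K.pathLaw s := by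
  induction n generalizing K s <;> by_cases hs : s ∈ T
  case pos | pos =>
    rw [K.setLIntegral_hitBy_of_mem hs, K.setLIntegral_hitBy_of_mem hs]
    exact hit [] (by simp) s hs
  case neg => simp only [setLIntegral_measure_zero _ _ (K.pathLaw_hitBy_zero hs), le_refl]
  case neg n ih =>
    rw [setLIntegral_pathLaw _ _ (PathSpace.measurableSet_hitBy _ _) hφ,
      setLIntegral_pathLaw _ _ (PathSpace.measurableSet_hitBy _ _) hψ,
      PathSpace.preimage_cons_hitBy_succ hs]
    refine ENNReal.tsum_le_tsum fun x => mul_le_mul_right ?_ _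
    calc ∫⁻ u in PathSpace.hitBy T n, φ (.cons s u) ∂(K.after [s]).pathLaw x
        ≤ ∫⁻ u in PathSpace.hitBy T n, φ u ∂(K.after [s]).pathLaw x :=
          lintegral_mono fun u => hφ_cons s hs u
      _ ≤ ∫⁻ u in PathSpace.hitBy T n, ψ u ∂(K.after [s]).pathLaw x :=
          ih _ x fun l hl => hit (s :: l) (by simpa [hs] using hl)
      _ ≤ ∫⁻ u in PathSpace.hitBy T n, ψ (.cons s u) ∂(K.after [s]).pathLaw x :=
          lintegral_mono fun u => hψ_cons s hs u

/-- `T` is reached, if at all, after finitely many steps, so an inequality of expectations from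
`T` on propagates backwards along the finitely many states that precede the first visit. -/
lemma lintegral_pathLaw_le_of_hit (hφ : Measurable φ) (hψ : Measurable ψ)
    (hφψ : ∀ u, (∀ i, u i ∉ T) → φ u ≤ ψ u)
    (hφ_cons : ∀ s, s ∉ T → ∀ u, φ (.cons s u) ≤ φ u)
    (hψ_cons : ∀ s, s ∉ T → ∀ u, ψ u ≤ ψ (.cons s u)) (K : StepLaw S) (s : S)
    (hit : ∀ l, (∀ x ∈ l, x ∉ T) → ∀ t ∈ T,
      ∫⁻ u, φ u ∂(K.after l).pathLaw t ≤ ∫⁻ u, ψ u ∂(K.after l).pathLaw t) :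
    ∫⁻ u, φ u ∂K.pathLaw s ≤ ∫⁻ u, ψ u ∂K.pathLaw s := by
  have hH : MeasurableSet (⋃ n, PathSpace.hitBy T n) :=
    .iUnion (PathSpace.measurableSet_hitBy T)
  have hdir := (PathSpace.monotone_hitBy T).directed_le
  rw [← lintegral_add_compl φ hH, ← lintegral_add_compl ψ hH]
  refine add_le_add ?_ (setLIntegral_mono hψ fun u hu => hφψ u (PathSpace.notMem_iUnion_hitBy.1 hu))
  rw [setLIntegral_iUnion_of_directed φ hdir, setLIntegral_iUnion_of_directed ψ hdir]
  exact iSup_mono fun n => setLIntegral_hitBy_le hφ hψ hφ_cons hψ_cons n K s hit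

end StepLaw

/-! ### The measure of a strategy profile -/

namespace Strategy

variable {A : Arena S} {pl : Player} {T : Set S}

@[ext]
lemma ext {τ τ' : Strategy A pl} (h : ∀ l s, τ.next l s = τ'.next l s) : τ = τ' := by
  cases τ
  cases τ'
  congr 1
  funext l s
  exact h l s

instance : Nonempty (Strategy A pl) :=
  ⟨⟨fun _ s => if h : A.E s = ∅ then s else (Set.nonempty_iff_ne_empty.2 h).some,
    fun _ s _ h => by simpa only [dif_neg h] using (Set.nonempty_iff_ne_empty.2 h).some_mem⟩⟩

/-- The strategy that remains once the states of `l₀` have been visited. -/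
def after (τ : Strategy A pl) (l₀ : List S) : Strategy A pl where
  next l := τ.next (l₀ ++ l)
  valid _ := τ.valid _

lemma after_after (τ : Strategy A pl) (l m : List S) : (τ.after l).after m = τ.after (l ++ m) := by
  simp only [after, List.append_assoc]

/-- The strategy that follows `τ s₀` on the plays that start at `s₀`. -/
def ofInitial (τ : S → Strategy A pl) : Strategy A pl where
  next l s := (τ (l.headD s)).next l s
  valid _ s := (τ _).valid _ s

/-- The strategy that plays as `τ` would if the first state of the play had been omitted. -/
def delay (τ : Strategy A pl) : Strategy A pl where
  next l := τ.next l.tail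
  valid l := τ.valid l.tail

lemma delay_after (τ : Strategy A pl) (s : S) : τ.delay.after [s] = τ := rfl

/-- The strategy that follows `τ` up to the first visit to `T` and then `τ'`, which it starts with
an empty history. -/
def switch (T : Set S) (τ τ' : Strategy A pl) : Strategy A pl where
  next l s := if ∀ x ∈ l, x ∉ T then τ.next l s else τ'.next (l.dropWhile (· ∉ T)).tail s
  valid l s hs hE := by
    split_ifs
    exacts [τ.valid _ s hs hE, τ'.valid _ s hs hE]

/-- The strategy that follows `τ k` between the `k`-th and the `k + 1`-st visit to `T`, each time
starting with an empty history. -/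
def relay (T : Set S) (τ : ℕ → Strategy A pl) : Strategy A pl where
  next l := (τ (l.countP (· ∈ T))).next (l.rtakeWhile (· ∉ T))
  valid _ := (τ _).valid _

lemma switch_next_of_forall_notMem {τ τ' : Strategy A pl} {l : List S} (h : ∀ x ∈ l, x ∉ T) :
    (switch T τ τ').next l = τ.next l :=
  funext fun _ => if_pos h

lemma switch_after {τ τ' : Strategy A pl} {l : List S} {t : S} (hl : ∀ x ∈ l, x ∉ T) (ht : t ∈ T) :
    (switch T τ τ').after (l ++ [t]) = τ' := by
  ext m s
  have hm : ¬∀ x ∈ l ++ [t] ++ m, x ∉ T := fun h => h t (by simp) ht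
  have hdrop : (l ++ [t] ++ m).dropWhile (· ∉ T) = t :: m := by
    rw [List.append_assoc, List.dropWhile_append_of_pos (by simpa using hl)]
    simp [ht]
  simp only [after, switch, if_neg hm, hdrop, List.tail_cons]

lemma relay_next_of_forall_notMem {τ : ℕ → Strategy A pl} {l : List S} (h : ∀ x ∈ l, x ∉ T) :
    (relay T τ).next l = (τ 0).next l := by
  have hcount : l.countP (· ∈ T) = 0 := List.countP_eq_zero.2 (by simpa using h)
  have htake : l.rtakeWhile (· ∉ T) = l := List.rtakeWhile_eq_self_iff.2 (by simpa using h)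
  simp only [relay, hcount, htake]

lemma relay_after {τ : ℕ → Strategy A pl} {l : List S} {t : S} (hl : ∀ x ∈ l, x ∉ T) (ht : t ∈ T) :
    (relay T τ).after (l ++ [t]) = relay T fun k => τ (k + 1) := by
  ext m s
  have hcount : (l ++ [t] ++ m).countP (· ∈ T) = m.countP (· ∈ T) + 1 := by
    have : l.countP (· ∈ T) = 0 := List.countP_eq_zero.2 (by simpa using hl)
    simp [this, ht, add_comm]
  have htake (a b : List S) : (a ++ t :: b).takeWhile (· ∉ T) = a.takeWhile (· ∉ T) := by
    induction a with
    | nil => simp [ht]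
    | cons x a ih => simp only [List.cons_append, List.takeWhile_cons, ih]
  simp only [after, relay, hcount, List.rtakeWhile, List.reverse_append, List.reverse_singleton,
    List.singleton_append, htake]

end Strategy

section Profile

variable (A : Arena S) (σ₁ : Strategy A Player.one) (σ₂ : Strategy A Player.two)

/-- The step law of a strategy profile. A terminal state is repeated, as in `MC`. The alternative
`PMF.pure s` at a state of Nature is a junk value, excluded by `Arena.Wellformed`. -/
def stepLaw : StepLaw S := fun l s =>
  if A.E s = ∅ then PMF.pure s else
    match A.owner s with
    | Player.one => PMF.pure (σ₁.next l s)
    | Player.two => PMF.pure (σ₂.next l s)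
    | Player.nature =>
      if h : ∃ d : PMF S, ∀ t, d t = ENNReal.ofReal (A.prob s t) then h.choose else PMF.pure s

/-- The relation between a node `l ++ [s]` of the tree `MC` and the states `x` with which the
tree extends it. -/
def IsStep (l : List S) (s x : S) : Prop :=
  if A.E s = ∅ then x = s else
    match A.owner s with
    | Player.one => x = σ₁.next l s
    | Player.two => x = σ₂.next l s
    | Player.nature => x ∈ A.E s

lemma stepLaw_after (l : List S) :
    (stepLaw A σ₁ σ₂).after l = stepLaw A (σ₁.after l) (σ₂.after l) := rfl

variable {A σ₁ σ₂}

lemma Arena.Wellformed.hasSum_ofReal (hA : A.Wellformed) {s : S} (hs : A.owner s = Player.nature) :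
    HasSum (fun t => ENNReal.ofReal (A.prob s t)) 1 := by
  obtain ⟨hnonneg, hsum, -⟩ := hA s hs
  rw [← ENNReal.ofReal_one, ← hsum.tsum_eq, ENNReal.ofReal_tsum_of_nonneg hnonneg hsum.summable]
  exact ENNReal.summable.hasSum

lemma Arena.Wellformed.nonterminal (hA : A.Wellformed) {s : S} (hs : A.owner s = Player.nature) :
    A.E s ≠ ∅ := by
  obtain ⟨-, hsum, hE⟩ := hA s hs
  rw [hE, Ne, Function.support_eq_empty_iff]
  intro h
  exact one_ne_zero (hsum.unique (h ▸ hasSum_zero))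

lemma stepLaw_apply (hA : A.Wellformed) (l : List S) (s x : S) :
    stepLaw A σ₁ σ₂ l s x =
      if IsStep A σ₁ σ₂ l s x then ENNReal.ofReal (stepProb A s x) else 0 := by
  by_cases hE : A.E s = ∅
  · have hs : A.owner s ≠ Player.nature := fun h => hA.nonterminal h hE
    simp [stepLaw, IsStep, stepProb, hE, hs, PMF.pure_apply]
  cases hs : A.owner s with
  | one | two => simp [stepLaw, IsStep, stepProb, hE, hs, PMF.pure_apply]
  | nature =>
    have hx : x ∉ A.E s → A.prob s x = 0 := by simp [(hA s hs).2.2]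
    have hPMF : ∃ d : PMF S, ∀ t, d t = ENNReal.ofReal (A.prob s t) :=
      ⟨⟨_, hA.hasSum_ofReal hs⟩, fun _ => rfl⟩
    have : stepLaw A σ₁ σ₂ l s x = ENNReal.ofReal (A.prob s x) := by
      simp only [stepLaw, if_neg hE, hs, dif_pos hPMF, hPMF.choose_spec]
    by_cases hxE : x ∈ A.E s
    · simp [this, IsStep, stepProb, hE, hs, hxE]
    · simp [this, IsStep, hE, hs, hxE, hx]

lemma IsStep.mem_E {l : List S} {s x : S} (h : IsStep A σ₁ σ₂ l s x) (hE : A.E s ≠ ∅) :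
    x ∈ A.E s := by
  cases hs : A.owner s <;> simp only [IsStep, if_neg hE, hs] at h
  · exact h ▸ σ₁.valid l s hs hE
  · exact h ▸ σ₂.valid l s hs hE
  · exact h

lemma stepLaw_of_E_eq_singleton (hA : A.Wellformed) {s t : S} (hs : A.E s = {t}) (l : List S) :
    stepLaw A σ₁ σ₂ l s = PMF.pure t := by
  have hzero (x : S) (hx : x ≠ t) : stepLaw A σ₁ σ₂ l s x = 0 := by
    rw [stepLaw_apply hA, if_neg]
    intro h
    exact hx (by simpa [hs] using h.mem_E (by simp [hs]))
  have hone : stepLaw A σ₁ σ₂ l s t = 1 :=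
    (tsum_eq_single t hzero).symm.trans (PMF.tsum_coe _)
  ext x
  by_cases hx : x = t
  · simp [hx, hone]
  · simp [hx, hzero x hx]

lemma mc_append_pair_iff {s₀ s x : S} {l : List S} :
    MC A σ₁ σ₂ s₀ (l ++ [s, x]) ↔ MC A σ₁ σ₂ s₀ (l ++ [s]) ∧ IsStep A σ₁ σ₂ l s x := by
  constructor
  · intro h
    generalize hL : l ++ [s, x] = L at h
    cases h
    case root => simpa using congrArg List.length hL
    all_goals
      obtain ⟨rfl, hsx⟩ := List.append_inj' hL rfl
      obtain ⟨rfl, rfl⟩ : s = _ ∧ x = _ := by simpa using hsx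
      refine ⟨‹_›, ?_⟩
    case nature hs _ hx => simpa [IsStep, hs, (Set.nonempty_of_mem hx).ne_empty] using hx
    all_goals simp_all only [IsStep, if_true, if_false, ne_eq]
  · rintro ⟨h, hx⟩
    by_cases hE : A.E s = ∅
    · obtain rfl : x = s := by simpa [IsStep, hE] using hx
      exact .term l x h hE
    cases hs : A.owner s <;> simp only [IsStep, if_neg hE, hs] at hx
    · exact hx ▸ .one l s h hs hE
    · exact hx ▸ .two l s h hs hE
    · exact .nature l s x h hs hx

lemma head?_of_mc {s₀ : S} {l : List S} (h : MC A σ₁ σ₂ s₀ l) : l.head? = some s₀ := by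
  induction h with
  | root => rfl
  | one l | two l | nature l | term l => cases l <;> assumption

lemma pathProb_append_pair (A : Arena S) (l : List S) (s x : S) :
    pathProb A (l ++ [s, x]) = pathProb A (l ++ [s]) * stepProb A s x := by
  match l with
  | [] | [_] => simp [pathProb]
  | _ :: y :: l =>
    have := pathProb_append_pair A (y :: l) s x
    simp only [List.cons_append, pathProb] at this ⊢
    rw [this, mul_assoc]

lemma stepProb_nonneg (hA : A.Wellformed) (s t : S) : 0 ≤ stepProb A s t := by
  unfold stepProb
  split_ifs with h
  exacts [(hA s h).1 t, zero_le_one]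

lemma ofReal_cylWeight (hA : A.Wellformed) (s : S) (l : List S) :
    ENNReal.ofReal (cylWeight A σ₁ σ₂ s (s :: l)) = (stepLaw A σ₁ σ₂).weight s l := by
  induction l using List.reverseRecOn with
  | nil => simp [cylWeight, MC.root, pathProb, StepLaw.weight]
  | append_singleton l x ih =>
    obtain ⟨m, t, hm⟩ : ∃ m t, s :: l = m ++ [t] :=
      ⟨_, _, (List.dropLast_append_getLast (List.cons_ne_nil s l)).symm⟩
    have hmx : s :: (l ++ [x]) = m ++ [t, x] := by rw [← List.cons_append, hm]; simp
    rw [StepLaw.weight_append_singleton hm, ← ih, hm, hmx, stepLaw_apply hA]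
    by_cases hmc : MC A σ₁ σ₂ s (m ++ [t]) <;> by_cases hstep : IsStep A σ₁ σ₂ m t x <;>
      simp [cylWeight, mc_append_pair_iff, hmc, hstep, pathProb_append_pair,
        ENNReal.ofReal_mul' (stepProb_nonneg hA t x)]

lemma pathLaw_cyl (hA : A.Wellformed) (s : S) {l : List S} (hl : l ≠ []) :
    (stepLaw A σ₁ σ₂).pathLaw s (cyl l) = ENNReal.ofReal (cylWeight A σ₁ σ₂ s l) := by
  obtain ⟨t, l, rfl⟩ := List.exists_cons_of_ne_nil hl
  rw [StepLaw.pathLaw_cyl_cons]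
  split_ifs with h
  · rw [← h, ofReal_cylWeight hA]
  · have : ¬MC A σ₁ σ₂ s (t :: l) := fun hmc => h (by simpa using (head?_of_mc hmc).symm)
    rw [cylWeight, if_neg this, ENNReal.ofReal_zero]

lemma pathMeasure_eq_pathLaw (hA : A.Wellformed) (s : S) :
    pathMeasure A σ₁ σ₂ s = (stepLaw A σ₁ σ₂).pathLaw s := by
  have h : ∃ μ : Measure (PathSpace S), IsProbabilityMeasure μ ∧
      ∀ l : List S, l ≠ [] → μ (cyl l) = ENNReal.ofReal (cylWeight A σ₁ σ₂ s l) :=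
    ⟨_, inferInstance, fun _ => pathLaw_cyl hA s⟩
  rw [pathMeasure, dif_pos h]
  have := h.choose_spec.1
  refine StepLaw.pathLaw_unique fun l => ?_
  rw [h.choose_spec.2 _ (List.cons_ne_nil s l), ofReal_cylWeight hA]

end Profile

section Payoff

variable {A : Arena S} {pri : S → ℕ} {R : S → ℝ} {s : S} {u : PathSpace S}

lemma payoff_of_first_terminal {i : ℕ} (hi : A.E (u i) = ∅) (hlt : ∀ j < i, A.E (u j) ≠ ∅) :
    payoff A pri R u = R (u i) := by
  have h : ∃ i, A.E (u i) = ∅ := ⟨i, hi⟩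
  rw [payoff, dif_pos h, (Nat.find_eq_iff h).2 ⟨hi, hlt⟩]

lemma payoff_of_never_terminal (h : ∀ i, A.E (u i) ≠ ∅) :
    payoff A pri R u = if Even (sSup {n | {i | pri (u i) = n}.Infinite}) then 1 else 0 :=
  dif_neg (not_exists.2 h)

lemma never_or_first_terminal (A : Arena S) (u : PathSpace S) :
    (∀ i, A.E (u i) ≠ ∅) ∨ ∃ i, A.E (u i) = ∅ ∧ ∀ j < i, A.E (u j) ≠ ∅ := by
  refine or_iff_not_imp_left.2 fun h => ?_
  push Not at h
  exact ⟨Nat.find h, Nat.find_spec h, fun _ => Nat.find_min h⟩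

lemma payoff_cons (hs : A.E s ≠ ∅) : payoff A pri R (.cons s u) = payoff A pri R u := by
  have hcons {i : ℕ} (h : ∀ j < i, A.E (u j) ≠ ∅) :
      ∀ j < i + 1, A.E (PathSpace.cons s u j) ≠ ∅ := fun
    | 0, _ => hs
    | j + 1, hj => h j (Nat.lt_of_succ_lt_succ hj)
  rcases never_or_first_terminal A u with h | ⟨i, hi, hlt⟩
  · have hinf (n : ℕ) :
        {i | pri (PathSpace.cons s u i) = n}.Infinite ↔ {i | pri (u i) = n}.Infinite := by
      rw [← Nat.frequently_atTop_iff_infinite, ← Filter.map_add_atTop_eq_nat 1,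
        Filter.frequently_map, ← Nat.frequently_atTop_iff_infinite]
      rfl
    rw [payoff_of_never_terminal h,
      payoff_of_never_terminal fun i => hcons (fun j _ => h j) i i.lt_succ_self]
    simp only [hinf]
  · rw [payoff_of_first_terminal hi hlt, payoff_of_first_terminal (i := i + 1) hi (hcons hlt)]
    rfl

lemma payoff_halt : payoff A pri R (.halt {s | A.E s = ∅} u) = payoff A pri R u := by
  have halt_apply {i : ℕ} (h : ∀ j < i, A.E (u j) ≠ ∅) :
      PathSpace.halt {s | A.E s = ∅} u i = u i :=
    PathSpace.halt_apply_of_forall_notMem h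
  rcases never_or_first_terminal A u with h | ⟨i, hi, hlt⟩
  · have : PathSpace.halt {s | A.E s = ∅} u = u := funext fun i => halt_apply fun j _ => h j
    rw [this]
  · rw [payoff_of_first_terminal hi hlt, payoff_of_first_terminal (i := i), halt_apply hlt]
    · rwa [halt_apply hlt]
    · intro j hj
      rw [halt_apply fun k hk => hlt k (hk.trans hj)]
      exact hlt j hj

lemma payoff_mem_Icc (hR : ∀ s, R s ∈ Set.Icc (0 : ℝ) 1) (u : PathSpace S) :
    payoff A pri R u ∈ Set.Icc (0 : ℝ) 1 := by
  unfold payoff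
  split_ifs
  exacts [hR _, ⟨zero_le_one, le_rfl⟩, ⟨le_rfl, zero_le_one⟩]

lemma sSup_eq_iSup_ite (B : Set ℕ) : sSup B = ⨆ n, if n ∈ B then n else 0 := by
  by_cases hB : BddAbove B
  · have hbdd : BddAbove (Set.range fun n => if n ∈ B then n else 0) := by
      obtain ⟨b, hb⟩ := hB
      refine ⟨b, Set.forall_mem_range.2 fun n => ?_⟩
      split_ifs with hn
      exacts [hb hn, zero_le]
    refine le_antisymm (csSup_le' fun n hn => ?_) (ciSup_le fun n => ?_)
    · exact le_of_eq_of_le (if_pos hn).symm (le_ciSup hbdd n)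
    · split_ifs with hn
      exacts [le_csSup hB hn, zero_le]
  · have hsub : B ⊆ Set.range fun n => if n ∈ B then n else 0 := fun n hn => ⟨n, if_pos hn⟩
    rw [csSup_of_not_bddAbove hB, iSup, csSup_of_not_bddAbove fun h => hB (h.mono hsub)]

lemma measurable_payoff (A : Arena S) (pri : S → ℕ) (R : S → ℝ) :
    Measurable (payoff A pri R) := by
  have hterm (i : ℕ) : Measurable fun u : PathSpace S => A.E (u i) = ∅ :=
    PathSpace.measurable_mem i {s | A.E s = ∅}
  have hinf (n : ℕ) : Measurable fun u : PathSpace S => {i | pri (u i) = n}.Infinite := by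
    simp only [← Nat.frequently_atTop_iff_infinite, Filter.frequently_atTop]
    exact .forall fun k => .exists fun i =>
      .and measurable_const (PathSpace.measurable_mem i {s | pri s = n})
  have hsup : Measurable fun u : PathSpace S => sSup {n | {i | pri (u i) = n}.Infinite} := by
    simp only [sSup_eq_iSup_ite]
    exact .iSup fun n => .ite (measurableSet_setOfPred.2 (hinf n)) measurable_const measurable_const
  have heven : MeasurableSet {u : PathSpace S | Even (sSup {n | {i | pri (u i) = n}.Infinite})} :=
    hsup (t := {n | Even n}) trivial
  have hnever : Measurable fun u : PathSpace S => ∀ i, A.E (u i) ≠ ∅ :=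
    .forall fun i => (hterm i).not
  have hmem (n : ℕ) : Measurable fun u : PathSpace S => R (u n) :=
    fun t _ => PathSpace.measurable_eval n (t := R ⁻¹' t) trivial
  have hdecided (u : PathSpace S) : ∃ n, A.E (u n) = ∅ ∨ ∀ i, A.E (u i) ≠ ∅ := by
    rcases never_or_first_terminal A u with h | ⟨i, hi, -⟩
    exacts [⟨0, .inr h⟩, ⟨i, .inl hi⟩]
  convert Measurable.find (f := fun n u => if A.E (u n) = ∅ then R (u n) else
      if Even (sSup {n | {i | pri (u i) = n}.Infinite}) then 1 else 0)
    (fun n => .ite (measurableSet_setOfPred.2 (hterm n)) (hmem n)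
      (.ite heven measurable_const measurable_const))
    (fun n => measurableSet_setOfPred.2 ((hterm n).or hnever)) hdecided using 2 with u
  rcases never_or_first_terminal A u with h | ⟨i, hi, hlt⟩
  · rw [payoff_of_never_terminal h, if_neg (h _)]
  · have hfind : Nat.find (hdecided u) = i :=
      (Nat.find_eq_iff _).2 ⟨.inl hi, fun j hj h => h.elim (hlt j hj) fun h => h i hi⟩
    rw [payoff_of_first_terminal hi hlt, hfind, if_pos hi]

end Payoff

/-! ### Parity games and their values -/

lemma StepLaw.pathLaw_congr_initial {K K' : StepLaw S} {s : S} (h₀ : K [] s = K' [] s)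
    (h : K.after [s] = K'.after [s]) : K.pathLaw s = K'.pathLaw s := by
  rw [pathLaw_eq_sum, h₀, h, ← pathLaw_eq_sum]

/-- A 2½-player parity game on the states `S`: a well-formed arena together with a parity
structure. The set of priorities need not be finite. -/
structure ParityGame (S : Type) where
  arena : Arena S
  pri : S → ℕ
  R : S → ℝ
  wellformed : arena.Wellformed
  reward_mem_Icc : ∀ s, R s ∈ Set.Icc (0 : ℝ) 1

namespace ParityGame

variable (G : ParityGame S)

/-- The payoff, as an extended nonnegative real: then integrals, suprema and infima exist
unconditionally. -/
def reward (u : PathSpace S) : ENNReal := ENNReal.ofReal (payoff G.arena G.pri G.R u)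

/-- The expected reward `E(M^s_{σ₁,σ₂})`, as an extended nonnegative real. -/
def expected (σ₁ : Strategy G.arena Player.one) (σ₂ : Strategy G.arena Player.two) (s : S) :
    ENNReal :=
  ∫⁻ u, G.reward u ∂(stepLaw G.arena σ₁ σ₂).pathLaw s

/-- The lower value `Val↓`, as an extended nonnegative real. -/
def lower (s : S) : ENNReal := ⨆ σ₁, ⨅ σ₂, G.expected σ₁ σ₂ s

/-- The upper value `Val↑`, as an extended nonnegative real. -/
def upper (s : S) : ENNReal := ⨅ σ₂, ⨆ σ₁, G.expected σ₁ σ₂ s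

variable {s t : S} {u : PathSpace S}

lemma measurable_reward : Measurable G.reward :=
  (measurable_payoff _ _ _).ennreal_ofReal

lemma reward_le_one (u : PathSpace S) : G.reward u ≤ 1 :=
  ENNReal.ofReal_le_one.2 (payoff_mem_Icc G.reward_mem_Icc u).2

variable {G}

lemma reward_cons (hs : G.arena.E s ≠ ∅) : G.reward (.cons s u) = G.reward u := by
  rw [reward, payoff_cons hs, reward]

lemma reward_of_never_terminal (h : ∀ i, G.arena.E (u i) ≠ ∅) :
    G.reward u = if Even (sSup {n | {i | G.pri (u i) = n}.Infinite}) then 1 else 0 := by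
  rw [reward, payoff_of_never_terminal h]
  split_ifs <;> simp

lemma lintegral_reward_of_terminal (hs : G.arena.E s = ∅) (K : StepLaw S) :
    ∫⁻ u, G.reward u ∂K.pathLaw s = ENNReal.ofReal (G.R s) := by
  have h : ∀ᵐ u ∂K.pathLaw s, G.reward u = ENNReal.ofReal (G.R s) := by
    filter_upwards [K.ae_eval_zero s] with u hu
    rw [reward, payoff_of_first_terminal (i := 0) (hu ▸ hs) (by simp), hu]
  simp [lintegral_congr_ae h]

section Values

variable {σ₁ : Strategy G.arena Player.one} {σ₂ : Strategy G.arena Player.two}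

lemma expected_le_one : G.expected σ₁ σ₂ s ≤ 1 :=
  (lintegral_mono G.reward_le_one).trans (by simp)

lemma toReal_expected : (G.expected σ₁ σ₂ s).toReal = expReward G.arena G.pri G.R σ₁ σ₂ s := by
  rw [expReward, pathMeasure_eq_pathLaw G.wellformed, integral_eq_lintegral_of_nonneg_ae
    (.of_forall fun u => (payoff_mem_Icc G.reward_mem_Icc u).1)
    (measurable_payoff _ _ _).aestronglyMeasurable]
  rfl

lemma iInf_expected_le_one (σ₁ : Strategy G.arena Player.one) (s : S) :
    ⨅ σ₂, G.expected σ₁ σ₂ s ≤ 1 :=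
  iInf_le_of_le (Classical.arbitrary _) expected_le_one

lemma lower_le_one : G.lower s ≤ 1 := iSup_le fun σ₁ => iInf_expected_le_one σ₁ s

lemma iSup_expected_le_one (σ₂ : Strategy G.arena Player.two) (s : S) :
    ⨆ σ₁, G.expected σ₁ σ₂ s ≤ 1 :=
  iSup_le fun _ => expected_le_one

lemma upper_le_one : G.upper s ≤ 1 :=
  iInf_le_of_le (Classical.arbitrary _) (iSup_expected_le_one _ s)

lemma lower_le_upper : G.lower s ≤ G.upper s := iSup_iInf_le_iInf_iSup _

lemma toReal_lower : (G.lower s).toReal = lowerValue G.arena G.pri G.R s := by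
  rw [lower, ENNReal.toReal_iSup fun σ₁ => ((iInf_expected_le_one σ₁ s).trans_lt
    ENNReal.one_lt_top).ne, lowerValue]
  congr! 2 with σ₁
  rw [ENNReal.toReal_iInf fun σ₂ => (expected_le_one.trans_lt ENNReal.one_lt_top).ne]
  simp only [toReal_expected]

lemma toReal_upper : (G.upper s).toReal = upperValue G.arena G.pri G.R s := by
  rw [upper, ENNReal.toReal_iInf fun σ₂ => ((iSup_expected_le_one σ₂ s).trans_lt
    ENNReal.one_lt_top).ne, upperValue]
  congr! 2 with σ₂
  rw [ENNReal.toReal_iSup fun σ₁ => (expected_le_one.trans_lt ENNReal.one_lt_top).ne]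
  simp only [toReal_expected]

lemma ofReal_lowerValue : ENNReal.ofReal (lowerValue G.arena G.pri G.R s) = G.lower s := by
  rw [← toReal_lower, ENNReal.ofReal_toReal (lower_le_one.trans_lt ENNReal.one_lt_top).ne]

lemma ofReal_upperValue : ENNReal.ofReal (upperValue G.arena G.pri G.R s) = G.upper s := by
  rw [← toReal_upper, ENNReal.ofReal_toReal (upper_le_one.trans_lt ENNReal.one_lt_top).ne]

lemma eq_lowerValue_and_lowerValue_eq_upperValue {x : ℝ} (hx : 0 ≤ x)
    (hlow : ENNReal.ofReal x ≤ G.lower s) (hup : G.upper s ≤ ENNReal.ofReal x) :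
    x = lowerValue G.arena G.pri G.R s ∧
      lowerValue G.arena G.pri G.R s = upperValue G.arena G.pri G.R s := by
  have hl : G.lower s = ENNReal.ofReal x := (lower_le_upper.trans hup).antisymm hlow
  have hu : G.upper s = ENNReal.ofReal x := hup.antisymm (hlow.trans lower_le_upper)
  simp only [← toReal_lower, ← toReal_upper, hl, hu, ENNReal.toReal_ofReal hx, and_self]

lemma exists_forall_lower_le {ε : ENNReal} (hε : ε ≠ 0) :
    ∃ τ, ∀ s σ₂, G.lower s ≤ G.expected τ σ₂ s + ε := by
  have hτ (s : S) : ∃ τ, G.lower s ≤ (⨅ σ₂, G.expected τ σ₂ s) + ε := by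
    rcases eq_or_ne (G.lower s) 0 with h | h
    · exact ⟨Classical.arbitrary _, h.le.trans zero_le⟩
    · obtain ⟨τ, hτ⟩ := lt_iSup_iff.1
        (ENNReal.sub_lt_self (lower_le_one.trans_lt ENNReal.one_lt_top).ne h hε)
      exact ⟨τ, tsub_le_iff_right.1 hτ.le⟩
  choose τ hτ using hτ
  refine ⟨.ofInitial τ, fun s σ₂ => (hτ s).trans ?_⟩
  have : (stepLaw G.arena (.ofInitial τ) σ₂).pathLaw s =
      (stepLaw G.arena (τ s) σ₂).pathLaw s := StepLaw.pathLaw_congr_initial rfl rfl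
  rw [expected, this]
  gcongr
  exact iInf_le _ σ₂

lemma exists_forall_le_upper {ε : ENNReal} (hε : ε ≠ 0) :
    ∃ τ, ∀ s σ₁, G.expected σ₁ τ s ≤ G.upper s + ε := by
  have hτ (s : S) : ∃ τ, ⨆ σ₁, G.expected σ₁ τ s < G.upper s + ε :=
    iInf_lt_iff.1 (ENNReal.lt_add_right (upper_le_one.trans_lt ENNReal.one_lt_top).ne hε)
  choose τ hτ using hτ
  refine ⟨.ofInitial τ, fun s σ₁ => le_trans ?_ (hτ s).le⟩
  have : (stepLaw G.arena σ₁ (.ofInitial τ)).pathLaw s =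
      (stepLaw G.arena σ₁ (τ s)).pathLaw s := StepLaw.pathLaw_congr_initial rfl rfl
  rw [expected, this]
  exact le_iSup (fun σ₁ => G.expected σ₁ (τ s) s) σ₁

lemma expected_of_E_eq_singleton (hs : G.arena.E s = {t}) :
    G.expected σ₁ σ₂ s = G.expected (σ₁.after [s]) (σ₂.after [s]) t := by
  have hs' : G.arena.E s ≠ ∅ := by simp [hs]
  rw [expected, StepLaw.lintegral_pathLaw_of_eq_pure
    (stepLaw_of_E_eq_singleton G.wellformed hs []) G.measurable_reward]
  simp only [reward_cons hs', stepLaw_after, expected]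

lemma lower_le_of_E_eq_singleton (hs : G.arena.E s = {t}) : G.lower t ≤ G.lower s := by
  refine iSup_le fun τ => le_iSup_of_le τ.delay (le_iInf fun σ₂ => ?_)
  rw [expected_of_E_eq_singleton hs, Strategy.delay_after]
  exact iInf_le _ _

lemma upper_le_of_E_eq_singleton (hs : G.arena.E s = {t}) : G.upper s ≤ G.upper t := by
  refine le_iInf fun τ => iInf_le_of_le τ.delay (iSup_le fun σ₁ => ?_)
  rw [expected_of_E_eq_singleton hs, Strategy.delay_after]
  exact le_iSup (fun σ₁ => G.expected σ₁ τ t) _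

end Values

end ParityGame

/-! ### Games with terminal states looped back -/

namespace ParityGame

section Truncation

/-- The payoff of the plays of `G` that do not visit `T` from the `n`-th state on; the other plays
get `0`. The repetitions of a terminal state do not belong to the play, whence the last clause. -/
def truncatedReward (G : ParityGame S) (T : Set S) (n : ℕ) (u : PathSpace S) : ENNReal :=
  if ∀ i ≥ n, u i ∈ T → ∃ j < i, G.arena.E (u j) = ∅ then G.reward u else 0

variable {G : ParityGame S} {T : Set S} {n : ℕ} {u : PathSpace S}

lemma measurable_truncatedReward : Measurable (G.truncatedReward T n) := by
  refine .ite (measurableSet_setOfPred.2 ?_) G.measurable_reward measurable_const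
  refine .forall fun i => .imp measurable_const (.imp (PathSpace.measurable_mem i T) ?_)
  exact .exists fun j => .and measurable_const (PathSpace.measurable_mem j {s | G.arena.E s = ∅})

lemma truncatedReward_le_reward : G.truncatedReward T n u ≤ G.reward u := by
  unfold truncatedReward
  split_ifs
  exacts [le_rfl, zero_le]

lemma monotone_truncatedReward : Monotone fun n => G.truncatedReward T n u := by
  intro m n hmn
  simp only [truncatedReward]
  split_ifs with hm hn
  exacts [le_rfl, absurd (fun i hi => hm i (hmn.trans hi)) hn, zero_le, le_rfl]

lemma truncatedReward_zero_of_mem (hu : u 0 ∈ T) : G.truncatedReward T 0 u = 0 :=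
  if_neg fun h => by simpa using h 0 le_rfl hu

lemma truncatedReward_succ_cons {s : S} (hs : G.arena.E s ≠ ∅) :
    G.truncatedReward T (n + 1) (.cons s u) = G.truncatedReward T n u := by
  have hexists (i : ℕ) : (∃ j < i + 1, G.arena.E (PathSpace.cons s u j) = ∅) ↔
      ∃ j < i, G.arena.E (u j) = ∅ := by
    rw [Nat.exists_lt_succ_left]
    exact or_iff_right hs
  have hforall : (∀ i ≥ n + 1, PathSpace.cons s u i ∈ T →
      ∃ j < i, G.arena.E (PathSpace.cons s u j) = ∅) ↔
      ∀ i ≥ n, u i ∈ T → ∃ j < i, G.arena.E (u j) = ∅ := by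
    refine ⟨fun h i hi hT => (hexists i).1 (h (i + 1) (by omega) hT), fun h i hi => ?_⟩
    obtain ⟨i, rfl⟩ := Nat.exists_eq_add_one_of_ne_zero (by omega : i ≠ 0)
    exact fun hT => (hexists i).2 (h i (by omega) hT)
  simp only [truncatedReward, hforall, reward_cons hs]

lemma truncatedReward_cons_le {s : S} (hs : G.arena.E s ≠ ∅) :
    G.truncatedReward T n (.cons s u) ≤ G.truncatedReward T n u :=
  (monotone_truncatedReward n.le_succ).trans_eq (truncatedReward_succ_cons hs)

end Truncation

/-- The relation between the game of the body of a fixed point formula, in which the states of `T`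
are terminal, and the game of the formula itself, in which a least fixed point is unfolded at the
states `t ∈ T` by a move to `h t`. -/
structure IsLoopback (G G' : ParityGame S) (T : Set S) (h : S → S) (top : ℕ) : Prop where
  owner_eq : G'.arena.owner = G.arena.owner
  prob_eq : G'.arena.prob = G.arena.prob
  E_of_mem : ∀ t ∈ T, G.arena.E t = ∅
  E_eq_singleton : ∀ t ∈ T, G'.arena.E t = {h t}
  E_of_notMem : ∀ s ∉ T, G'.arena.E s = G.arena.E s
  R_of_notMem : ∀ s ∉ T, G'.R s = G.R s
  pri_of_mem : ∀ t ∈ T, G'.pri t = top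
  pri_of_notMem : ∀ s ∉ T, G'.pri s = G.pri s
  pri_le : ∀ s, G'.pri s ≤ top
  odd_top : Odd top

namespace IsLoopback

variable {G G' : ParityGame S} {T : Set S} {h : S → S} {top : ℕ} {pl : Player}

lemma notMem (H : IsLoopback G G' T h top) {s : S} (hs : G.arena.E s ≠ ∅) : s ∉ T :=
  fun hT => hs (H.E_of_mem s hT)

/-- A strategy of `G` as a strategy of `G'`, whose moves at the states of `T` are forced. -/
def lift (H : IsLoopback G G' T h top) (τ : Strategy G.arena pl) : Strategy G'.arena pl where
  next l s := if s ∈ T then h s else τ.next l s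
  valid l s hs hE := by
    split_ifs with hT
    · rw [H.E_eq_singleton s hT]
      rfl
    · rw [H.E_of_notMem s hT] at hE ⊢
      exact τ.valid l s (H.owner_eq ▸ hs) hE

/-- A strategy of `G'` as a strategy of `G`. -/
def restrict (H : IsLoopback G G' T h top) (τ : Strategy G'.arena pl) : Strategy G.arena pl where
  next := τ.next
  valid l s hs hE := by
    have hT := H.notMem hE
    rw [← H.E_of_notMem s hT] at hE ⊢
    exact τ.valid l s (H.owner_eq ▸ hs) hE

lemma lift_next_of_notMem (H : IsLoopback G G' T h top) (τ : Strategy G.arena pl) (l : List S)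
    {s : S} (hs : s ∉ T) : (H.lift τ).next l s = τ.next l s :=
  if_neg hs

lemma lintegral_reward_eq_expected (H : IsLoopback G G' T h top)
    {σ₁ : Strategy G.arena Player.one} {σ₂ : Strategy G.arena Player.two}
    {τ₁ : Strategy G'.arena Player.one} {τ₂ : Strategy G'.arena Player.two}
    (h₁ : ∀ l s, (∀ x ∈ l, x ∉ T) → s ∉ T → τ₁.next l s = σ₁.next l s)
    (h₂ : ∀ l s, (∀ x ∈ l, x ∉ T) → s ∉ T → τ₂.next l s = σ₂.next l s) (s : S) :
    ∫⁻ u, G.reward u ∂(stepLaw G'.arena τ₁ τ₂).pathLaw s = G.expected σ₁ σ₂ s := by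
  refine StepLaw.lintegral_pathLaw_congr (T := {s | G.arena.E s = ∅}) (fun l s hl hs => ?_)
    G.measurable_reward (fun u => by rw [reward, payoff_halt, reward]) s
  have hl' : ∀ x ∈ l, x ∉ T := fun x hx => H.notMem (hl x hx)
  simp only [stepLaw, H.E_of_notMem s (H.notMem hs), H.owner_eq, H.prob_eq,
    h₁ l s hl' (H.notMem hs), h₂ l s hl' (H.notMem hs)]

lemma reward_eq_of_never_terminal (H : IsLoopback G G' T h top) {u : PathSpace S}
    (hu : ∀ i, G.arena.E (u i) ≠ ∅) : G'.reward u = G.reward u := by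
  have hE (i : ℕ) : G'.arena.E (u i) ≠ ∅ := by
    rw [H.E_of_notMem _ (H.notMem (hu i))]
    exact hu i
  rw [reward_of_never_terminal hu, reward_of_never_terminal hE]
  simp only [fun i => H.pri_of_notMem _ (H.notMem (hu i))]

section Lower

/-- Until the first visit to `T`, the profile plays in `G'` as in `G`; the visit is worth at least
as much in `G'` as in `G`. -/
lemma expected_le_expected_switch (H : IsLoopback G G' T h top) {ε : ENNReal}
    {τ : Strategy G.arena Player.one} {τ' : Strategy G'.arena Player.one}
    (hτ' : ∀ t ∈ T, ∀ σ₂, ENNReal.ofReal (G.R t) ≤ G'.expected τ' σ₂ (h t) + ε)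
    (σ₂ : Strategy G'.arena Player.two) (s : S) :
    G.expected τ (H.restrict σ₂) s ≤ G'.expected (.switch T (H.lift τ) τ') σ₂ s + ε := by
  have hadd (K : StepLaw S) (s : S) :
      ∫⁻ u, G'.reward u + ε ∂K.pathLaw s = ∫⁻ u, G'.reward u ∂K.pathLaw s + ε := by
    simp [lintegral_add_right _ measurable_const]
  rw [← H.lintegral_reward_eq_expected (τ₁ := .switch T (H.lift τ) τ') (τ₂ := σ₂)
    (fun l s hl hs => by
      rw [Strategy.switch_next_of_forall_notMem hl, H.lift_next_of_notMem τ l hs])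
    (fun _ _ _ _ => rfl), expected, ← hadd]
  refine StepLaw.lintegral_pathLaw_le_of_hit (T := {s | G.arena.E s = ∅}) G.measurable_reward
    (G'.measurable_reward.add_const ε) (fun u hu => ?_) (fun s hs u => (reward_cons hs).le)
    (fun s hs u => ?_) _ _ (fun l hl t ht => ?_)
  · rw [H.reward_eq_of_never_terminal hu]
    exact le_self_add
  · rw [reward_cons]
    rwa [H.E_of_notMem s (H.notMem hs)]
  rw [hadd, lintegral_reward_of_terminal ht]
  by_cases hT : t ∈ T
  · rw [stepLaw_after, ← expected, expected_of_E_eq_singleton (H.E_eq_singleton t hT),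
      Strategy.after_after, Strategy.switch_after (fun x hx => H.notMem (hl x hx)) hT]
    exact hτ' t hT _
  · have hE' : G'.arena.E t = ∅ := (H.E_of_notMem t hT).trans ht
    rw [lintegral_reward_of_terminal hE', H.R_of_notMem t hT]
    exact le_self_add

lemma lower_le (H : IsLoopback G G' T h top)
    (hT : ∀ t ∈ T, ENNReal.ofReal (G.R t) ≤ G'.lower (h t)) (s : S) : G.lower s ≤ G'.lower s := by
  refine ENNReal.le_of_forall_pos_le_add fun ε hε _ => ?_
  have hε' : (ε : ENNReal) / 2 ≠ 0 := by simpa using hε.ne'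
  obtain ⟨τ, hτ⟩ := G.exists_forall_lower_le hε'
  obtain ⟨τ', hτ'⟩ := G'.exists_forall_lower_le hε'
  refine tsub_le_iff_right.1 (le_iSup_of_le (.switch T (H.lift τ) τ') (le_iInf fun σ₂ => ?_))
  rw [tsub_le_iff_right]
  calc
    G.lower s ≤ G.expected τ (H.restrict σ₂) s + ε / 2 := hτ s _
    _ ≤ G'.expected (.switch T (H.lift τ) τ') σ₂ s + ε / 2 + ε / 2 := by
      gcongr
      exact H.expected_le_expected_switch (fun t ht σ₂ => (hT t ht).trans (hτ' (h t) σ₂)) σ₂ s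
    _ = G'.expected (.switch T (H.lift τ) τ') σ₂ s + ε := by rw [add_assoc, ENNReal.add_halves]

end Lower

section Upper

lemma reward_le_iSup_truncatedReward (H : IsLoopback G G' T h top) (u : PathSpace S) :
    G'.reward u ≤ ⨆ n, G'.truncatedReward T n u := by
  have of_truncated (n : ℕ) (hn : ∀ i ≥ n, u i ∈ T → ∃ j < i, G'.arena.E (u j) = ∅) :
      G'.reward u ≤ ⨆ n, G'.truncatedReward T n u :=
    le_iSup_of_le n (if_pos hn).ge
  rcases never_or_first_terminal G'.arena u with hu | ⟨i, hi, -⟩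
  · by_cases hinf : {i | u i ∈ T}.Infinite
    · have htop : {i | G'.pri (u i) = top}.Infinite :=
        hinf.mono fun i hi => H.pri_of_mem (u i) hi
      have hgreatest : IsGreatest {n | {i | G'.pri (u i) = n}.Infinite} top := by
        refine ⟨htop, fun n hn => ?_⟩
        obtain ⟨i, rfl⟩ := hn.nonempty
        exact H.pri_le (u i)
      rw [reward_of_never_terminal hu, hgreatest.csSup_eq,
        if_neg (Nat.not_even_iff_odd.2 H.odd_top)]
      exact zero_le
    · obtain ⟨n, hn⟩ := (Set.not_infinite.1 hinf).bddAbove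
      exact of_truncated (n + 1) fun i hi hT => absurd (hn hT) (by omega)
  · exact of_truncated (i + 1) fun k hk _ => ⟨i, by omega, hi⟩

lemma lintegral_truncatedReward_le_expected (H : IsLoopback G G' T h top) {n : ℕ} {c : ENNReal}
    {σ₁ : Strategy G'.arena Player.one} {τ : Strategy G.arena Player.two}
    {τ' : Strategy G'.arena Player.two}
    (hτ' : ∀ l s, (∀ x ∈ l, x ∉ T) → s ∉ T → τ'.next l s = τ.next l s)
    (hit : ∀ l, (∀ x ∈ l, x ∉ T) → ∀ t ∈ T,
      ∫⁻ u, G'.truncatedReward T n u ∂((stepLaw G'.arena σ₁ τ').after l).pathLaw t ≤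
        ENNReal.ofReal (G.R t) + c) (s : S) :
    ∫⁻ u, G'.truncatedReward T n u ∂(stepLaw G'.arena σ₁ τ').pathLaw s ≤
      G.expected (H.restrict σ₁) τ s + c := by
  have hadd (K : StepLaw S) (s : S) :
      ∫⁻ u, G.reward u + c ∂K.pathLaw s = ∫⁻ u, G.reward u ∂K.pathLaw s + c := by
    simp [lintegral_add_right _ measurable_const]
  rw [← H.lintegral_reward_eq_expected (τ₁ := σ₁) (fun _ _ _ _ => rfl) hτ', ← hadd]
  refine StepLaw.lintegral_pathLaw_le_of_hit (T := {s | G.arena.E s = ∅})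
    measurable_truncatedReward (G.measurable_reward.add_const c) (fun u hu => ?_)
    (fun s hs u => truncatedReward_cons_le ?_) (fun s hs u => by rw [reward_cons hs]) _ _
    (fun l hl t ht => ?_)
  · rw [← H.reward_eq_of_never_terminal hu]
    exact truncatedReward_le_reward.trans le_self_add
  · rwa [H.E_of_notMem s (H.notMem hs)]
  rw [hadd, lintegral_reward_of_terminal ht]
  by_cases hT : t ∈ T
  · exact hit l (fun x hx => H.notMem (hl x hx)) t hT
  · have hE' : G'.arena.E t = ∅ := (H.E_of_notMem t hT).trans ht
    rw [← H.R_of_notMem t hT, ← lintegral_reward_of_terminal hE']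
    exact (lintegral_mono fun u => truncatedReward_le_reward).trans le_self_add

/-- The play passes at most `n` more times through `T`, and each time Player 2 loses at most the
tolerance of one more strategy. -/
lemma lintegral_truncatedReward_relay_le (H : IsLoopback G G' T h top)
    (hT : ∀ t ∈ T, G.upper (h t) ≤ ENNReal.ofReal (G.R t)) {n : ℕ} {ε : ℕ → ENNReal}
    {τ : ℕ → Strategy G.arena Player.two}
    (hτ : ∀ k s σ₁, G.expected σ₁ (τ k) s ≤ G.upper s + ε k) {t : S} (ht : t ∈ T)
    (σ₁ : Strategy G'.arena Player.one) :
    ∫⁻ u, G'.truncatedReward T n u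
        ∂(stepLaw G'.arena σ₁ (.relay T fun k => H.lift (τ k))).pathLaw (h t) ≤
      ENNReal.ofReal (G.R t) + ∑' k, ε k := by
  refine (H.lintegral_truncatedReward_le_expected (τ := τ 0) (c := ∑' k, ε (k + 1))
    (fun l s hl hs => ?_) (fun l hl t ht => ?_) _).trans ?_
  · rw [Strategy.relay_next_of_forall_notMem hl, H.lift_next_of_notMem _ l hs]
  · match n with
    | 0 =>
      have hzero : ∀ᵐ u ∂((stepLaw G'.arena σ₁ (.relay T fun k => H.lift (τ k))).after l).pathLaw t,
          G'.truncatedReward T 0 u = 0 := by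
        filter_upwards [StepLaw.ae_eval_zero _ t] with u hu
        exact truncatedReward_zero_of_mem (hu ▸ ht)
      rw [lintegral_congr_ae hzero, lintegral_zero]
      exact zero_le
    | n + 1 =>
      have hE : G'.arena.E t ≠ ∅ := by simp [H.E_eq_singleton t ht]
      rw [stepLaw_after, StepLaw.lintegral_pathLaw_of_eq_pure (stepLaw_of_E_eq_singleton
        G'.wellformed (H.E_eq_singleton t ht) []) measurable_truncatedReward]
      simp only [truncatedReward_succ_cons hE, stepLaw_after, Strategy.after_after,
        Strategy.relay_after hl ht]
      exact lintegral_truncatedReward_relay_le H hT (fun k => hτ (k + 1)) ht _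
  · calc
      G.expected (H.restrict σ₁) (τ 0) (h t) + ∑' k, ε (k + 1)
        ≤ ENNReal.ofReal (G.R t) + ε 0 + ∑' k, ε (k + 1) := by
          gcongr
          exact (hτ 0 (h t) _).trans (by gcongr; exact hT t ht)
      _ = ENNReal.ofReal (G.R t) + ∑' k, ε k := by
          rw [add_assoc, ← tsum_eq_zero_add' ENNReal.summable]

lemma upper_le (H : IsLoopback G G' T h top)
    (hT : ∀ t ∈ T, G.upper (h t) ≤ ENNReal.ofReal (G.R t)) {t : S} (ht : t ∈ T) :
    G'.upper (h t) ≤ ENNReal.ofReal (G.R t) := by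
  refine ENNReal.le_of_forall_pos_le_add fun δ hδ _ => ?_
  obtain ⟨ε, hε, hsum⟩ := ENNReal.exists_pos_sum_of_countable (ENNReal.coe_ne_zero.2 hδ.ne') ℕ
  choose τ hτ using fun k => G.exists_forall_le_upper (ENNReal.coe_ne_zero.2 (hε k).ne')
  refine iInf_le_of_le (.relay T fun k => H.lift (τ k)) (iSup_le fun σ₁ => ?_)
  calc
    G'.expected σ₁ (.relay T fun k => H.lift (τ k)) (h t)
      ≤ ∫⁻ u, ⨆ n, G'.truncatedReward T n u ∂_ :=
        lintegral_mono H.reward_le_iSup_truncatedReward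
    _ = ⨆ n, ∫⁻ u, G'.truncatedReward T n u ∂_ :=
        lintegral_iSup (fun _ => measurable_truncatedReward)
          fun _ _ hmn _ => monotone_truncatedReward hmn
    _ ≤ ENNReal.ofReal (G.R t) + ∑' k, (ε k : ENNReal) :=
        iSup_le fun n => H.lintegral_truncatedReward_relay_le hT hτ ht σ₁
    _ ≤ ENNReal.ofReal (G.R t) + δ := by gcongr

end Upper

end IsLoopback

end ParityGame

/-! ### The game of a formula -/

lemma exists_unitInterval_ofReal_eq {a : ENNReal} (ha : a ≤ 1) :
    ∃ x : unitInterval, ENNReal.ofReal x = a :=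
  ⟨⟨a.toReal, ENNReal.toReal_nonneg, ENNReal.toReal_le_of_le_ofReal zero_le_one (by simpa)⟩,
    ENNReal.ofReal_toReal (ha.trans_lt ENNReal.one_lt_top).ne⟩

namespace pLmu

variable {L P : Type} {F G : pLmu L} {X Y : ℕ}

lemma varInfo_succ (F : pLmu L) (d Y : ℕ) :
    F.varInfo (d + 1) Y = (F.varInfo d Y).map fun x => (x.1 + 1, x.2) := by
  induction F generalizing d with
  | var Z => rfl
  | dia _ _ ih | box _ _ ih => exact ih _
  | or G H ihG ihH | and G H ihG ihH =>
    simp only [varInfo, ihG (d + 1), ihH (d + 1)]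
    cases G.varInfo (d + 1) Y <;> simp
  | mu Z G ih | nu Z G ih =>
    simp only [varInfo]
    split_ifs
    exacts [rfl, ih _]

lemma varInfo_eq_none (hY : Y ∉ F.binders) (d : ℕ) : F.varInfo d Y = none := by
  induction F generalizing d with
  | var Z => rfl
  | dia _ _ ih | box _ _ ih => exact ih hY _
  | or G H ihG ihH | and G H ihG ihH =>
    simp only [binders, List.mem_append, not_or] at hY
    simp [varInfo, ihG hY.1, ihH hY.2]
  | mu Z G ih | nu Z G ih =>
    simp only [binders, List.mem_cons, not_or] at hY
    simp [varInfo, Ne.symm hY.1, ih hY.2]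

lemma bodyOf_eq_none (hY : Y ∉ F.binders) : F.bodyOf Y = none := by
  induction F with
  | var Z => rfl
  | dia _ _ ih | box _ _ ih => exact ih hY
  | or G H ihG ihH | and G H ihG ihH =>
    simp only [binders, List.mem_append, not_or] at hY
    simp [bodyOf, ihG hY.1, ihH hY.2]
  | mu Z G ih | nu Z G ih =>
    simp only [binders, List.mem_cons, not_or] at hY
    simp [bodyOf, Ne.symm hY.1, ih hY.2]

lemma gamePri_le (F : pLmu L) (s : GState L P) : gamePri F s ≤ 2 * F.size + 1 := by
  obtain ⟨p | d, _ | _ | _ | _ | _ | _ | _⟩ := s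
  case inl.var Y =>
    simp only [gamePri]
    rcases F.varInfo 0 Y with _ | ⟨d, _ | _⟩ <;> simp only <;> omega
  all_goals exact Nat.zero_le _

lemma gameR_mem_Icc (F : pLmu L) (ρ : ℕ → P → unitInterval) (s : GState L P) :
    gameR F ρ s ∈ Set.Icc (0 : ℝ) 1 := by
  obtain ⟨p | d, _ | _ | _ | _ | _ | _ | _⟩ := s
  case inl.var Y => exact (ρ Y p).2
  all_goals simp [gameR]

lemma gameArena_owner_inl_ne_nature (M : PLTS L P) (F G : pLmu L) (p : P) :
    (gameArena M F).owner (Sum.inl p, G) ≠ Player.nature := by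
  cases G with
  | var Y =>
    simp only [gameArena]
    rcases F.varInfo 0 Y with _ | ⟨d, _ | _⟩ <;> simp
  | _ => simp [gameArena]

lemma gameArena_wellformed (M : PLTS L P) (F : pLmu L) : (gameArena M F).Wellformed := by
  rintro ⟨p | d, G⟩ hs
  · exact absurd hs (gameArena_owner_inl_ne_nature M F G p)
  let pr : GState L P → ℝ := (gameArena M F).prob (Sum.inr d, G)
  let i : P → GState L P := fun q => (Sum.inl q, G)
  have hi : Function.Injective i := fun a b hab => by simpa [i] using hab
  have pr_i (q : P) : pr (i q) = d.f q := if_pos rfl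
  have pr_eq_zero : ∀ t ∉ Set.range i, pr t = 0
    | (Sum.inl q, G'), ht => if_neg fun h => ht ⟨q, by rw [h]⟩
    | (Sum.inr _, _), _ => rfl
  refine ⟨fun t => ?_, ?_, ?_⟩
  · by_cases ht : t ∈ Set.range i
    · obtain ⟨q, rfl⟩ := ht
      exact (d.nonneg q).trans_eq (pr_i q).symm
    · exact (pr_eq_zero t ht).ge
  · exact (hi.hasSum_iff pr_eq_zero).1 (by simpa only [Function.comp_def, pr_i] using d.sum_one)
  · have hsupp : Function.support pr ⊆ Set.range i := fun t ht =>
      by_contra fun h => ht (pr_eq_zero t h)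
    calc i '' Function.support d.f
      _ = i '' (i ⁻¹' Function.support pr) := by
        congr 1
        ext q
        simp only [Set.mem_preimage, Function.mem_support, pr_i]
      _ = Function.support pr := Set.image_preimage_eq_of_subset hsupp

/-- The game `𝒢^F_ρ`, bundled with the proof that it is a 2½-player parity game. -/
def game (M : PLTS L P) (F : pLmu L) (ρ : ℕ → P → unitInterval) : ParityGame (GState L P) where
  arena := gameArena M F
  pri := gamePri F
  R := gameR F ρ
  wellformed := gameArena_wellformed M F
  reward_mem_Icc := gameR_mem_Icc F ρ

lemma gameArena_mu_owner (M : PLTS L P) (hX : X ∉ G.binders) :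
    (gameArena M (mu X G)).owner = (gameArena M G).owner := by
  ext ⟨p | d, H⟩ : 1
  · cases H with
    | var Y =>
      simp only [gameArena, varInfo]
      split_ifs with hY
      · rw [← hY, varInfo_eq_none hX]
      · rw [varInfo_succ]
        rcases G.varInfo 0 Y with _ | ⟨d, _ | _⟩ <;> rfl
    | _ => rfl
  · rfl

lemma gameArena_mu_E (M : PLTS L P) {s : GState L P}
    (hs : s ∉ Set.range fun q : P => (Sum.inl q, var X)) :
    (gameArena M (mu X G)).E s = (gameArena M G).E s := by
  obtain ⟨p | d, H⟩ := s
  · cases H with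
    | var Y =>
      have hY : X ≠ Y := fun h => hs ⟨p, by rw [h]⟩
      simp only [gameArena, bodyOf, if_neg hY]
    | _ => rfl
  · rfl

lemma gameR_update (F : pLmu L) {ρ : ℕ → P → unitInterval} {v : P → unitInterval} {s : GState L P}
    (hs : s ∉ Set.range fun q : P => (Sum.inl q, var X)) :
    gameR F (Function.update ρ X v) s = gameR F ρ s := by
  obtain ⟨p | d, H⟩ := s
  · cases H with
    | var Y =>
      have hY : Y ≠ X := fun h => hs ⟨p, by rw [h]⟩
      simp [gameR, hY]
    | _ => rfl
  · rfl

lemma gamePri_mu {s : GState L P} (hs : s ∉ Set.range fun q : P => (Sum.inl q, var X)) :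
    gamePri (mu X G) s = gamePri G s := by
  obtain ⟨p | d, H⟩ := s
  · cases H with
    | var Y =>
      have hY : X ≠ Y := fun h => hs ⟨p, by rw [h]⟩
      simp only [gamePri, varInfo, if_neg hY, varInfo_succ]
      rcases G.varInfo 0 Y with _ | ⟨d, _ | _⟩ <;> simp [size]
    | _ => rfl
  · rfl

lemma isLoopback_game (M : PLTS L P) (hX : X ∉ G.binders) (ρ : ℕ → P → unitInterval)
    (v : P → unitInterval) :
    (game M G (Function.update ρ X v)).IsLoopback (game M (mu X G) ρ)
      (Set.range fun q => (Sum.inl q, var X)) (fun s => (s.1, G)) (2 * (mu X G).size + 1) where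
  owner_eq := gameArena_mu_owner M hX
  prob_eq := rfl
  E_of_mem := by
    rintro _ ⟨q, rfl⟩
    simp only [game, gameArena, bodyOf_eq_none hX]
  E_eq_singleton := by
    rintro _ ⟨q, rfl⟩
    simp only [game, gameArena, bodyOf, if_pos]
  E_of_notMem _ := gameArena_mu_E M
  R_of_notMem _ hs := (gameR_update G hs).symm
  pri_of_mem := by
    rintro _ ⟨q, rfl⟩
    simp [game, gamePri, varInfo]
  pri_of_notMem _ := gamePri_mu
  pri_le := gamePri_le _
  odd_top := odd_two_mul_add_one _

lemma sem_mu_le {M : PLTS L P} {ρ : ℕ → P → unitInterval} {v : P → unitInterval}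
    (hv : sem M G (Function.update ρ X v) ≤ v) : sem M (mu X G) ρ ≤ v := by
  intro p
  rw [sem]
  exact (sInf_le hv : sInf _ ≤ v) p

lemma le_sem_mu {M : PLTS L P} {ρ : ℕ → P → unitInterval} {w : P → unitInterval}
    (hw : ∀ v, sem M G (Function.update ρ X v) ≤ v → w ≤ v) : w ≤ sem M (mu X G) ρ := by
  intro p
  rw [sem]
  exact (le_sInf hw : w ≤ sInf _) p

lemma game_R_update_var (M : PLTS L P) (F : pLmu L) (ρ : ℕ → P → unitInterval)
    (v : P → unitInterval) (q : P) :
    (game M F (Function.update ρ X v)).R (Sum.inl q, var X) = v q := by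
  simp [game, gameR]

lemma lower_le_lower_mu {M : PLTS L P} (hX : X ∉ G.binders) {ρ : ℕ → P → unitInterval}
    {v : P → unitInterval}
    (hv : ∀ q, ENNReal.ofReal (v q) ≤ (game M (mu X G) ρ).lower (Sum.inl q, G))
    (s : GState L P) :
    (game M G (Function.update ρ X v)).lower s ≤ (game M (mu X G) ρ).lower s := by
  refine (isLoopback_game M hX ρ v).lower_le ?_ s
  rintro _ ⟨q, rfl⟩
  rw [game_R_update_var]
  exact hv q

lemma upper_mu_le {M : PLTS L P} (hX : X ∉ G.binders) {ρ : ℕ → P → unitInterval}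
    {v : P → unitInterval}
    (hv : ∀ q, (game M G (Function.update ρ X v)).upper (Sum.inl q, G) ≤ ENNReal.ofReal (v q))
    (p : P) : (game M (mu X G) ρ).upper (Sum.inl p, G) ≤ ENNReal.ofReal (v p) := by
  rw [← game_R_update_var M G ρ v p]
  refine (isLoopback_game M hX ρ v).upper_le ?_ (t := (Sum.inl p, var X)) ⟨p, rfl⟩
  rintro _ ⟨q, rfl⟩
  rw [game_R_update_var]
  exact hv q

lemma ofReal_sem_mu_le_lower {M : PLTS L P} (hX : X ∉ G.binders) {ρ : ℕ → P → unitInterval}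
    (hG : ∀ v q, ENNReal.ofReal (sem M G (Function.update ρ X v) q) ≤
      (game M G (Function.update ρ X v)).lower (Sum.inl q, G)) (p : P) :
    ENNReal.ofReal (sem M (mu X G) ρ p) ≤ (game M (mu X G) ρ).lower (Sum.inl p, mu X G) := by
  choose v hv using fun q : P =>
    exists_unitInterval_ofReal_eq ((game M (mu X G) ρ).lower_le_one (s := (Sum.inl q, G)))
  have hprefixed : sem M G (Function.update ρ X v) ≤ v := fun q => by
    refine Subtype.coe_le_coe.1 ((ENNReal.ofReal_le_ofReal_iff (v q).2.1).1 ?_)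
    rw [hv]
    exact (hG v q).trans (lower_le_lower_mu hX (fun q' => (hv q').le) _)
  calc ENNReal.ofReal (sem M (mu X G) ρ p)
    _ ≤ ENNReal.ofReal (v p) := ENNReal.ofReal_le_ofReal (sem_mu_le hprefixed p)
    _ = (game M (mu X G) ρ).lower (Sum.inl p, G) := hv p
    _ ≤ (game M (mu X G) ρ).lower (Sum.inl p, mu X G) :=
      ParityGame.lower_le_of_E_eq_singleton rfl

lemma upper_le_ofReal_sem_mu {M : PLTS L P} (hX : X ∉ G.binders) {ρ : ℕ → P → unitInterval}
    (hG : ∀ v q, (game M G (Function.update ρ X v)).upper (Sum.inl q, G) ≤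
      ENNReal.ofReal (sem M G (Function.update ρ X v) q)) (p : P) :
    (game M (mu X G) ρ).upper (Sum.inl p, mu X G) ≤ ENNReal.ofReal (sem M (mu X G) ρ p) := by
  choose w hw using fun q : P =>
    exists_unitInterval_ofReal_eq ((game M (mu X G) ρ).upper_le_one (s := (Sum.inl q, G)))
  have hle (v : P → unitInterval) (hv : sem M G (Function.update ρ X v) ≤ v) : w ≤ v := by
    refine fun q => Subtype.coe_le_coe.1 ((ENNReal.ofReal_le_ofReal_iff (v q).2.1).1 ?_)
    rw [hw]
    exact upper_mu_le hX
      (fun q' => (hG v q').trans (ENNReal.ofReal_le_ofReal (hv q'))) q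
  calc (game M (mu X G) ρ).upper (Sum.inl p, mu X G)
    _ ≤ (game M (mu X G) ρ).upper (Sum.inl p, G) := ParityGame.upper_le_of_E_eq_singleton rfl
    _ = ENNReal.ofReal (w p) := (hw p).symm
    _ ≤ ENNReal.ofReal (sem M (mu X G) ρ p) := ENNReal.ofReal_le_ofReal (le_sem_mu hle p)

end pLmu

theorem mu_case_of_main_theorem_general {L P : Type} (M : PLTS L P) (G₁ : pLmu L) (X : ℕ)
    (hX : X ∉ G₁.binders) (ρ : ℕ → P → unitInterval)
    (IH : ∀ (v : P → unitInterval) (q : P),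
      (pLmu.sem M G₁ (Function.update ρ X v) q : ℝ) =
          lowerValue (gameArena M G₁) (gamePri G₁) (gameR G₁ (Function.update ρ X v))
            (Sum.inl q, G₁) ∧
        lowerValue (gameArena M G₁) (gamePri G₁) (gameR G₁ (Function.update ρ X v))
            (Sum.inl q, G₁) =
          upperValue (gameArena M G₁) (gamePri G₁) (gameR G₁ (Function.update ρ X v))
            (Sum.inl q, G₁))
    (p : P) :
    (pLmu.sem M (pLmu.mu X G₁) ρ p : ℝ) =
        lowerValue (gameArena M (pLmu.mu X G₁)) (gamePri (pLmu.mu X G₁))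
          (gameR (pLmu.mu X G₁) ρ) (Sum.inl p, pLmu.mu X G₁) ∧
      lowerValue (gameArena M (pLmu.mu X G₁)) (gamePri (pLmu.mu X G₁))
          (gameR (pLmu.mu X G₁) ρ) (Sum.inl p, pLmu.mu X G₁) =
        upperValue (gameArena M (pLmu.mu X G₁)) (gamePri (pLmu.mu X G₁))
          (gameR (pLmu.mu X G₁) ρ) (Sum.inl p, pLmu.mu X G₁) := by
  refine ParityGame.eq_lowerValue_and_lowerValue_eq_upperValue
    (G := pLmu.game M (pLmu.mu X G₁) ρ) (pLmu.sem M _ ρ p).2.1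
    (pLmu.ofReal_sem_mu_le_lower hX (fun v q => ?_) p)
    (pLmu.upper_le_ofReal_sem_mu hX (fun v q => ?_) p)
  · rw [(IH v q).1]
    exact (pLmu.game M G₁ _).ofReal_lowerValue.le
  · rw [(IH v q).1, (IH v q).2]
    exact (pLmu.game M G₁ _).ofReal_upperValue.ge

/-- **Inductive step for the least fixed point case** of the equivalence of the
denotational and game semantics of pLμ: assuming the equivalence for the body `G₁`
(under every interpretation), the equivalence holds for `μX.G₁`. -/
theorem mu_case_of_main_theorem {L P : Type} [Countable L]
    (M : PLTS L P) (G₁ : pLmu L) (X : ℕ) (hF : (pLmu.mu X G₁).NormalForm)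
    (IH : ∀ (ρ' : ℕ → P → unitInterval) (q : P),
      (pLmu.sem M G₁ ρ' q : ℝ) =
          lowerValue (gameArena M G₁) (gamePri G₁) (gameR G₁ ρ') (Sum.inl q, G₁) ∧
        lowerValue (gameArena M G₁) (gamePri G₁) (gameR G₁ ρ') (Sum.inl q, G₁) =
          upperValue (gameArena M G₁) (gamePri G₁) (gameR G₁ ρ') (Sum.inl q, G₁))
    (ρ : ℕ → P → unitInterval) (p : P) :
    (pLmu.sem M (pLmu.mu X G₁) ρ p : ℝ) =
        lowerValue (gameArena M (pLmu.mu X G₁)) (gamePri (pLmu.mu X G₁))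
          (gameR (pLmu.mu X G₁) ρ) (Sum.inl p, pLmu.mu X G₁) ∧
      lowerValue (gameArena M (pLmu.mu X G₁)) (gamePri (pLmu.mu X G₁))
          (gameR (pLmu.mu X G₁) ρ) (Sum.inl p, pLmu.mu X G₁) =
        upperValue (gameArena M (pLmu.mu X G₁)) (gamePri (pLmu.mu X G₁))
          (gameR (pLmu.mu X G₁) ρ) (Sum.inl p, pLmu.mu X G₁) :=
  mu_case_of_main_theorem_general M G₁ X (List.nodup_cons.1 hF.1).1 ρ
    (fun v => IH (Function.update ρ X v)) p
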